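/- arXiv:1104.2639 — 10 statements merged into one kernel-verified Lean document; each statement's English description precedes it below -/
import Mathlib

section
/- Let K be a compact Hausdorff space and μ a Radon probability measure on K. Suppose ℋ is a family of open subsets of K such that the collection of finite unions of finite intersections of members of ℋ forms a base of the topology of K. If there is a countable family ℱ of closed subsets of K such that μ(U) = sup{μ(F) : F ∈ ℱ, F ⊆ U} for every U ∈ ℋ, then μ is countably determined. -/
open MeasureTheory Set

/-- A (Radon probability) measure `μ` on a topological space is *countably determined*
if there is a countable family `𝓕` of closed sets such that
`μ U = sup {μ F : F ∈ 𝓕, F ⊆ U}` for every open set `U`. -/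
def CountablyDetermined {K : Type*} [TopologicalSpace K] [MeasurableSpace K]
    (μ : Measure K) : Prop :=
  ∃ 𝓕 : Set (Set K), 𝓕.Countable ∧ (∀ F ∈ 𝓕, IsClosed F) ∧
    ∀ U : Set K, IsOpen U → μ U = ⨆ (F : Set K) (_ : F ∈ 𝓕) (_ : F ⊆ U), μ F

/-- The collection of all finite unions of finite (nonempty) intersections of members
of a family `𝓗` of sets. -/
def FiniteUnionsOfFiniteInters {K : Type*} (𝓗 : Set (Set K)) : Set (Set K) :=
  {U | ∃ 𝓖 : Set (Set (Set K)), 𝓖.Finite ∧ (∀ S ∈ 𝓖, S.Finite ∧ S.Nonempty ∧ S ⊆ 𝓗) ∧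
      U = ⋃ S ∈ 𝓖, ⋂₀ S}

/-!
Close `𝓕` under finite unions and intersections; it stays countable and its members stay closed.
Call the union of the members of `𝓕` inside a set `A` the inner core of `A`. As `𝓕` is now
countable and directed, the inner core of `A` has measure `sup {μ F : F ∈ 𝓕, F ⊆ A}`. Since the
members of `𝓗` have finite measure, the approximation hypothesis says that each of them is almost
everywhere contained in its inner core. The sets with this property form a lattice, which hence
includes the whole base. A compact subset of an open set `U` is covered by finitely many basic sets
contained in `U`, so it is almost everywhere contained in the inner core of `U`, and inner
regularity of `μ` concludes.
-/

section Lattice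

variable {α : Type*}

lemma countable_supClosure [SemilatticeSup α] {s : Set α} (hs : s.Countable) :
    (supClosure s).Countable := by
  have hinj : Function.Injective fun t : {t : Finset α // t.Nonempty} ↦ (t.1 : Set α) :=
    Finset.coe_injective.comp Subtype.val_injective
  have hfinsets : {t : {t : Finset α // t.Nonempty} | (t.1 : Set α) ⊆ s}.Countable :=
    ((countable_ofPred_finite_subset hs).preimage hinj).mono
      fun t ht ↦ And.intro t.1.finite_toSet ht
  refine (hfinsets.image fun t ↦ t.1.sup' t.2 id).mono ?_
  rintro _ ⟨t, ht, hts, rfl⟩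
  exact ⟨⟨t, ht⟩, hts, rfl⟩

lemma countable_infClosure [SemilatticeInf α] {s : Set α} (hs : s.Countable) :
    (infClosure s).Countable :=
  countable_supClosure (α := αᵒᵈ) hs

lemma countable_latticeClosure [DistribLattice α] {s : Set α} (hs : s.Countable) :
    (latticeClosure s).Countable :=
  supClosure_infClosure s ▸ countable_supClosure (countable_infClosure hs)

lemma finiteUnionsOfFiniteInters_subset {𝓗 𝓛 : Set (Set α)} (h𝓛 : IsSublattice 𝓛)
    (hempty : ∅ ∈ 𝓛) (h𝓗 : 𝓗 ⊆ 𝓛) : FiniteUnionsOfFiniteInters 𝓗 ⊆ 𝓛 := by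
  rintro _ ⟨𝓖, h𝓖, hS, rfl⟩
  refine h𝓛.supClosed.biSup_mem h𝓖 hempty fun S hS𝓖 ↦ ?_
  obtain ⟨hfinite, hnonempty, hsubset⟩ := hS S hS𝓖
  exact h𝓛.infClosed.sInf_mem_of_nonempty hfinite hnonempty (hsubset.trans h𝓗)

end Lattice

lemma isClosed_of_mem_latticeClosure {X : Type*} [TopologicalSpace X] {𝓕 : Set (Set X)}
    (h𝓕 : ∀ F ∈ 𝓕, IsClosed F) : ∀ F ∈ latticeClosure 𝓕, IsClosed F :=
  latticeClosure_min (t := {F | IsClosed F}) h𝓕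
    ⟨fun _ hA _ hB ↦ hA.union hB, fun _ hA _ hB ↦ hA.inter hB⟩

/-- The union of the members of `𝓕` contained in `A`: the part of `A` that can be exhausted by
members of `𝓕`. -/
def innerCore {X : Type*} (𝓕 : Set (Set X)) (A : Set X) : Set X :=
  ⋃₀ {F ∈ 𝓕 | F ⊆ A}

namespace innerCore

variable {X : Type*} {𝓕 𝓛 : Set (Set X)} {A B : Set X}

lemma subset : innerCore 𝓕 A ⊆ A :=
  sUnion_subset fun _ hF ↦ hF.2

lemma mono (h𝓕𝓛 : 𝓕 ⊆ 𝓛) (hAB : A ⊆ B) : innerCore 𝓕 A ⊆ innerCore 𝓛 B :=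
  sUnion_subset_sUnion fun _ hF ↦ ⟨h𝓕𝓛 hF.1, hF.2.trans hAB⟩

lemma inter_subset (h𝓕 : InfClosed 𝓕) : innerCore 𝓕 A ∩ innerCore 𝓕 B ⊆ innerCore 𝓕 (A ∩ B) := by
  rintro x ⟨⟨F, ⟨hF, hFA⟩, hxF⟩, G, ⟨hG, hGB⟩, hxG⟩
  exact ⟨F ∩ G, ⟨h𝓕 hF hG, inter_subset_inter hFA hGB⟩, hxF, hxG⟩

variable [MeasurableSpace X]

lemma measurableSet (hcount : 𝓕.Countable) (hmeas : ∀ F ∈ 𝓕, MeasurableSet F) :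
    MeasurableSet (innerCore 𝓕 A) :=
  .sUnion (hcount.mono (sep_subset _ _)) fun F hF ↦ hmeas F hF.1

variable {μ : Measure X}

lemma iSup_measure_le : ⨆ (F : Set X) (_ : F ∈ 𝓕) (_ : F ⊆ A), μ F ≤ μ (innerCore 𝓕 A) :=
  iSup_le fun _ ↦ iSup₂_le fun hF hFA ↦ measure_mono (subset_sUnion_of_mem ⟨hF, hFA⟩)

lemma measure_eq_iSup (hcount : 𝓕.Countable) (h𝓕 : SupClosed 𝓕) :
    μ (innerCore 𝓕 A) = ⨆ (F : Set X) (_ : F ∈ 𝓕) (_ : F ⊆ A), μ F := by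
  have hsup : SupClosed {F ∈ 𝓕 | F ⊆ A} :=
    fun _ hF _ hG ↦ ⟨h𝓕 hF.1 hG.1, union_subset hF.2 hG.2⟩
  rw [innerCore, sUnion_eq_biUnion,
    measure_biUnion_eq_iSup (hcount.mono (sep_subset _ _)) hsup.directedOn]
  simp only [mem_ofPred_eq, iSup_and]

lemma ae_le_of_measure_eq_iSup (hcount : 𝓕.Countable) (hmeas : ∀ F ∈ 𝓕, MeasurableSet F)
    (hA : μ A ≠ ⊤) (happrox : μ A = ⨆ (F : Set X) (_ : F ∈ 𝓕) (_ : F ⊆ A), μ F) :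
    A ≤ᵐ[μ] innerCore 𝓕 A :=
  (ae_eq_of_subset_of_measure_ge subset (happrox.trans_le iSup_measure_le)
    (measurableSet hcount hmeas).nullMeasurableSet hA).symm.le

lemma ae_le_union (hA : A ≤ᵐ[μ] innerCore 𝓕 A) (hB : B ≤ᵐ[μ] innerCore 𝓕 B) :
    (A ∪ B : Set X) ≤ᵐ[μ] innerCore 𝓕 (A ∪ B) :=
  (hA.union hB).trans <| LE.le.eventuallyLE <|
    union_subset (mono Subset.rfl subset_union_left) (mono Subset.rfl subset_union_right)

lemma ae_le_inter (h𝓕 : InfClosed 𝓕) (hA : A ≤ᵐ[μ] innerCore 𝓕 A)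
    (hB : B ≤ᵐ[μ] innerCore 𝓕 B) : (A ∩ B : Set X) ≤ᵐ[μ] innerCore 𝓕 (A ∩ B) :=
  (hA.inter hB).trans (inter_subset h𝓕).eventuallyLE

lemma isSublattice_ae_le (h𝓕 : InfClosed 𝓕) :
    IsSublattice {A | A ≤ᵐ[μ] innerCore 𝓕 A} :=
  ⟨fun _ hA _ hB ↦ ae_le_union hA hB, fun _ hA _ hB ↦ ae_le_inter h𝓕 hA hB⟩

lemma ae_le_of_isCompact_of_isOpen [TopologicalSpace X] {𝓑 : Set (Set X)}
    (h𝓑 : TopologicalSpace.IsTopologicalBasis 𝓑) (hcore : ∀ B ∈ 𝓑, B ≤ᵐ[μ] innerCore 𝓕 B)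
    {C U : Set X} (hC : IsCompact C) (hU : IsOpen U) (hCU : C ⊆ U) :
    C ≤ᵐ[μ] innerCore 𝓕 U := by
  refine hC.induction_on (p := fun s ↦ s ≤ᵐ[μ] innerCore 𝓕 U)
    (empty_subset _).eventuallyLE (fun _ _ hst ht ↦ hst.eventuallyLE.trans ht)
    (fun _ _ hs ht ↦ union_self (innerCore 𝓕 U) ▸ hs.union ht) fun x hx ↦ ?_
  obtain ⟨B, hB, hxB, hBU⟩ := h𝓑.exists_subset_of_mem_open (hCU hx) hU
  exact ⟨B, mem_nhdsWithin_of_mem_nhds (h𝓑.mem_nhds hB hxB),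
    (hcore B hB).trans (mono Subset.rfl hBU).eventuallyLE⟩

end innerCore

theorem countablyDetermined_of_approx_on_pseudobase_general
    {X : Type*} [TopologicalSpace X] [MeasurableSpace X] [OpensMeasurableSpace X]
    {μ : Measure X} (hμ : μ.InnerRegularWRT IsCompact IsOpen)
    {𝓗 : Set (Set X)} (hfinite : ∀ U ∈ 𝓗, μ U ≠ ⊤)
    (hbase : TopologicalSpace.IsTopologicalBasis (FiniteUnionsOfFiniteInters 𝓗))
    {𝓕 : Set (Set X)} (hcount : 𝓕.Countable) (hclosed : ∀ F ∈ 𝓕, IsClosed F)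
    (happrox : ∀ U ∈ 𝓗, μ U = ⨆ (F : Set X) (_ : F ∈ 𝓕) (_ : F ⊆ U), μ F) :
    CountablyDetermined μ := by
  let 𝓛 := latticeClosure 𝓕
  have h𝓛 : IsSublattice 𝓛 := isSublattice_latticeClosure
  have h𝓛count : 𝓛.Countable := countable_latticeClosure hcount
  have hcore𝓗 : ∀ U ∈ 𝓗, U ≤ᵐ[μ] innerCore 𝓛 U := fun U hU ↦
    (innerCore.ae_le_of_measure_eq_iSup hcount (fun F hF ↦ (hclosed F hF).measurableSet)
      (hfinite U hU) (happrox U hU)).trans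
      (innerCore.mono subset_latticeClosure Subset.rfl).eventuallyLE
  have hcore_base : ∀ B ∈ FiniteUnionsOfFiniteInters 𝓗, B ≤ᵐ[μ] innerCore 𝓛 B :=
    finiteUnionsOfFiniteInters_subset (innerCore.isSublattice_ae_le h𝓛.infClosed)
      (empty_subset _).eventuallyLE hcore𝓗
  refine ⟨𝓛, h𝓛count, isClosed_of_mem_latticeClosure hclosed, fun U hU ↦ ?_⟩
  rw [← innerCore.measure_eq_iSup h𝓛count h𝓛.supClosed]
  refine le_antisymm ?_ (measure_mono innerCore.subset)
  rw [hμ.measure_eq_iSup hU]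
  exact iSup_le fun C ↦ iSup₂_le fun hCU hC ↦
    measure_mono_ae (innerCore.ae_le_of_isCompact_of_isOpen hbase hcore_base hC hU hCU)

theorem countablyDetermined_of_approx_on_pseudobase
    {K : Type*} [TopologicalSpace K] [CompactSpace K] [T2Space K]
    [MeasurableSpace K] [BorelSpace K]
    (μ : Measure K) [IsProbabilityMeasure μ] [μ.Regular]
    (𝓗 : Set (Set K)) (h𝓗 : ∀ U ∈ 𝓗, IsOpen U)
    (hbase : TopologicalSpace.IsTopologicalBasis (FiniteUnionsOfFiniteInters 𝓗))
    (𝓕 : Set (Set K)) (h𝓕count : 𝓕.Countable) (h𝓕closed : ∀ F ∈ 𝓕, IsClosed F)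
    (happrox : ∀ U ∈ 𝓗, μ U = ⨆ (F : Set K) (_ : F ∈ 𝓕) (_ : F ⊆ U), μ F) :
    CountablyDetermined μ :=
  countablyDetermined_of_approx_on_pseudobase_general Measure.Regular.innerRegular
    (fun U _ ↦ measure_ne_top μ U) hbase h𝓕count h𝓕closed happrox
end

section
/- Let X be a separable metrizable space and let K be a subspace of the product ℝ^X with the topology of pointwise convergence. Then for every Y ⊆ X, every x ∈ Y, and every δ > 0, the set {g ∈ K : osc(g, Y, x) ≥ δ} is a G_δ subset of K. -/
open Set

/-- `osc g Y x` is the oscillation at `x` of the restriction of `g : X → ℝ` to `Y ⊆ X`: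
the infimum, over open neighbourhoods `U` of `x`, of the diameter of `g '' (U ∩ Y)`. -/
noncomputable def osc {X : Type*} [TopologicalSpace X] (g : X → ℝ) (Y : Set X) (x : X) :
    ENNReal :=
  ⨅ (U : Set X) (_ : IsOpen U) (_ : x ∈ U), EMetric.diam (g '' (U ∩ Y))

/-!
For a fixed set `S`, the diameter of `g '' S` is a supremum of functions `edist (g y) (g z)` that
are continuous in `g` for pointwise convergence, so it is lower semicontinuous in `g`, and its
superlevel sets `{c ≤ ·}` are Gδ. By monotonicity, the infimum defining the oscillation may be taken
over a countable neighbourhood basis of `x`, so the superlevel sets of the oscillation are countable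
intersections of such Gδ sets.
-/

open Filter Topology

theorem isGδ_setOf_le_of_lowerSemicontinuous {Z R : Type*} [TopologicalSpace Z] [LinearOrder R]
    [DenselyOrdered R] [TopologicalSpace R] [OrderTopology R] [FirstCountableTopology R]
    {h : Z → R} (hh : LowerSemicontinuous h) (c : R) : IsGδ {z | c ≤ h z} := by
  by_cases hc : IsMin c
  · have setOf_le_eq : {z | c ≤ h z} = univ := eq_univ_of_forall fun z => hc.isBot (h z)
    rw [setOf_le_eq]
    exact .univ
  · obtain ⟨b, hb⟩ := not_isMin_iff.1 hc
    obtain ⟨u, -, hu_lt, hu⟩ := exists_seq_strictMono_tendsto' hb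
    have setOf_le_eq : {z | c ≤ h z} = ⋂ n, h ⁻¹' Ioi (u n) := by
      ext z
      simp only [mem_ofPred_eq, mem_iInter, mem_preimage, mem_Ioi]
      exact ⟨fun hz n => (hu_lt n).2.trans_le hz,
        fun hz => le_of_tendsto' hu fun n => (hz n).le⟩
    rw [setOf_le_eq]
    exact .iInter_of_isOpen fun n => hh.isOpen_preimage (u n)

theorem lowerSemicontinuous_ediam_image {Z α E : Type*} [TopologicalSpace Z]
    [PseudoEMetricSpace E] {f : Z → α → E} {s : Set α}
    (hf : ∀ a ∈ s, Continuous fun z => f z a) :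
    LowerSemicontinuous fun z => Metric.ediam (f z '' s) := by
  simp only [Metric.ediam, iSup_image]
  exact lowerSemicontinuous_biSup fun a ha => lowerSemicontinuous_biSup fun b hb =>
    ((hf a ha).edist (hf b hb)).lowerSemicontinuous

theorem osc_eq_iInf_of_hasBasis {X ι : Type*} [TopologicalSpace X] {x : X} {p : ι → Prop}
    {B : ι → Set X} (hB : (𝓝 x).HasBasis p B) (g : X → ℝ) (Y : Set X) :
    osc g Y x = ⨅ (i) (_ : p i), Metric.ediam (g '' (B i ∩ Y)) := by
  have ediam_mono : Monotone fun U : Set X => Metric.ediam (g '' (U ∩ Y)) := fun U V hUV =>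
    Metric.ediam_mono (image_mono (inter_subset_inter_left Y hUV))
  rw [← hB.biInf_mem ediam_mono, (nhds_basis_opens x).biInf_mem ediam_mono]
  simp only [osc, iInf_and]
  exact iInf_congr fun U => iInf_comm

theorem isGδ_osc_ge_general {X Z : Type*} [TopologicalSpace X] [TopologicalSpace Z]
    (f : Z → X → ℝ) (Y : Set X) (hf : ∀ y ∈ Y, Continuous fun z => f z y)
    (x : X) [(𝓝 x).IsCountablyGenerated] (c : ENNReal) :
    IsGδ {z | c ≤ osc (f z) Y x} := by
  obtain ⟨B, hB⟩ := (𝓝 x).exists_antitone_basis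
  simp only [osc_eq_iInf_of_hasBasis hB.1, iInf_true, le_iInf_iff, ofPred_forall]
  exact .iInter fun n =>
    isGδ_setOf_le_of_lowerSemicontinuous (lowerSemicontinuous_ediam_image fun y hy => hf y hy.2) c

theorem isGδ_osc_ge {X : Type*} [TopologicalSpace X] [TopologicalSpace.SeparableSpace X]
    [TopologicalSpace.MetrizableSpace X]
    (K : Set (X → ℝ)) (Y : Set X) (x : X) (hxY : x ∈ Y) (δ : ℝ) (hδ : 0 < δ) :
    IsGδ {g : K | ENNReal.ofReal δ ≤ osc (g : X → ℝ) Y x} :=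
  isGδ_osc_ge_general (fun g : K => (g : X → ℝ)) Y
    (fun y _ => (continuous_apply y).comp continuous_subtype_val) x _
end

section
/- Let X be a separable metrizable space, K ⊆ ℝ^X a compact space (with the pointwise topology), and μ a Radon probability measure on K. Suppose that for every δ > 0 the space X can be written as X = ⋃_{n∈ω} X_n(δ) so that for every n and every x ∈ X_n(δ) one has μ({g ∈ K : osc(g, X_n(δ), x) ≥ δ}) < δ. Then μ is countably determined. -/
open MeasureTheory Set

/-!
Up to measure `δ`, small oscillation on a piece `Y` of `X` makes all points of a small
neighbourhood in `Y` give almost the same evaluation `g ↦ g x`. By the Lindelöf property, countably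
many points `z` therefore suffice to approximate every evaluation uniformly, to any precision, on
closed sets of almost full measure taken from a countable family. The countable family asked for
consists of the closed sets in the algebra generated by these sets and the preimages of balls with
rational radii under the countably many evaluations. It approximates from inside, up to small
measure, a neighbourhood of each point of an open set, hence each compact subset of an open set, and
regularity of `μ` concludes.
-/

open Filter Topology
open scoped ENNReal

section InnerApprox

variable {K : Type*} [MeasurableSpace K] {μ : Measure K} {𝓕 : Set (Set K)} {s t U V : Set K}

/-- Members of `𝓕` contained in `U` exhaust the set `s` up to arbitrarily small measure.
The set `s` need not be contained in `U`. -/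
def InnerApprox (μ : Measure K) (𝓕 : Set (Set K)) (s U : Set K) : Prop :=
  ∀ ε : ℝ≥0∞, 0 < ε → ∃ F ∈ 𝓕, F ⊆ U ∧ μ (s \ F) ≤ ε

theorem InnerApprox.mono (h : InnerApprox μ 𝓕 t U) (hst : s ⊆ t) (hUV : U ⊆ V) :
    InnerApprox μ 𝓕 s V := fun ε hε ↦
  let ⟨F, hF, hFU, hμ⟩ := h ε hε
  ⟨F, hF, hFU.trans hUV, (measure_mono (sdiff_subset_sdiff_left hst)).trans hμ⟩

theorem InnerApprox.inter (h𝓕 : InfClosed 𝓕) (hU : InnerApprox μ 𝓕 s U)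
    (hV : InnerApprox μ 𝓕 s V) : InnerApprox μ 𝓕 s (U ∩ V) := by
  intro ε hε
  obtain ⟨F, hF, hFU, hμF⟩ := hU (ε / 2) (ENNReal.half_pos hε.ne')
  obtain ⟨G, hG, hGV, hμG⟩ := hV (ε / 2) (ENNReal.half_pos hε.ne')
  refine ⟨F ∩ G, h𝓕 hF hG, inter_subset_inter hFU hGV, ?_⟩
  calc μ (s \ (F ∩ G)) = μ (s \ F ∪ s \ G) := by rw [sdiff_inter]
    _ ≤ μ (s \ F) + μ (s \ G) := measure_union_le _ _
    _ ≤ ε / 2 + ε / 2 := add_le_add hμF hμG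
    _ = ε := ENNReal.add_halves ε

theorem InnerApprox.union_left (h𝓕 : SupClosed 𝓕) (hs : InnerApprox μ 𝓕 s U)
    (ht : InnerApprox μ 𝓕 t U) : InnerApprox μ 𝓕 (s ∪ t) U := by
  intro ε hε
  obtain ⟨F, hF, hFU, hμF⟩ := hs (ε / 2) (ENNReal.half_pos hε.ne')
  obtain ⟨G, hG, hGU, hμG⟩ := ht (ε / 2) (ENNReal.half_pos hε.ne')
  have hsub : (s ∪ t) \ (F ∪ G) ⊆ s \ F ∪ t \ G := by grind
  refine ⟨F ∪ G, h𝓕 hF hG, union_subset hFU hGU, ?_⟩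
  calc μ ((s ∪ t) \ (F ∪ G)) ≤ μ (s \ F) + μ (t \ G) :=
        (measure_mono hsub).trans (measure_union_le _ _)
    _ ≤ ε / 2 + ε / 2 := add_le_add hμF hμG
    _ = ε := ENNReal.add_halves ε

/-- The filter of the sets `U` that approximate some member of `l` from inside, in the sense of
`InnerApprox`. It is finer than `𝓝 g` as soon as every function of a family inducing the topology
tends along it to its value at `g`. -/
def innerApproxFilter (μ : Measure K) (h𝓕 : InfClosed 𝓕) (huniv : univ ∈ 𝓕) (l : Filter K) :
    Filter K where
  sets := {U | ∃ s ∈ l, InnerApprox μ 𝓕 s U}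
  univ_sets := ⟨univ, univ_mem, fun ε _ ↦ ⟨univ, huniv, subset_rfl, by simp⟩⟩
  sets_of_superset := fun ⟨s, hs, h⟩ hUV ↦ ⟨s, hs, h.mono subset_rfl hUV⟩
  inter_sets := fun ⟨s, hs, hU⟩ ⟨t, ht, hV⟩ ↦ ⟨s ∩ t, inter_mem hs ht,
    .inter h𝓕 (hU.mono inter_subset_left subset_rfl) (hV.mono inter_subset_right subset_rfl)⟩

variable [TopologicalSpace K]

theorem InnerApprox.of_isCompact {C : Set K} (hC : IsCompact C) (h𝓕 : SupClosed 𝓕)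
    (hempty : ∅ ∈ 𝓕) (h : ∀ g ∈ C, ∃ s ∈ 𝓝 g, InnerApprox μ 𝓕 s U) : InnerApprox μ 𝓕 C U :=
  hC.induction_on (fun _ _ ↦ ⟨∅, hempty, empty_subset _, by simp⟩)
    (fun _ _ hst ht ↦ ht.mono hst subset_rfl) (fun _ _ hs ht ↦ hs.union_left h𝓕 ht)
    (fun g hg ↦ let ⟨s, hs, hsU⟩ := h g hg; ⟨s, mem_nhdsWithin_of_mem_nhds hs, hsU⟩)

theorem countablyDetermined_of_innerApproxFilter_le_nhds [μ.Regular] (hcount : 𝓕.Countable)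
    (hclosed : ∀ F ∈ 𝓕, IsClosed F) (h𝓕 : IsSublattice 𝓕) (hempty : ∅ ∈ 𝓕) (huniv : univ ∈ 𝓕)
    (h : ∀ g : K, innerApproxFilter μ h𝓕.infClosed huniv (𝓝 g) ≤ 𝓝 g) :
    CountablyDetermined μ := by
  refine ⟨𝓕, hcount, hclosed, fun U hU ↦ le_antisymm ?_ ?_⟩
  · refine le_of_forall_lt fun r hr ↦ ?_
    obtain ⟨C, hCU, hC, hrC⟩ := hU.exists_lt_isCompact hr
    have hCapprox : InnerApprox μ 𝓕 C U :=
      .of_isCompact hC h𝓕.supClosed hempty fun g hg ↦ h g (hU.mem_nhds (hCU hg))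
    refine hrC.trans_le (ENNReal.le_of_forall_pos_le_add fun ε hε _ ↦ ?_)
    obtain ⟨F, hF, hFU, hμF⟩ := hCapprox ε (ENNReal.coe_pos.2 hε)
    calc μ C ≤ μ (C ∩ F) + μ (C \ F) := measure_le_inter_add_sdiff μ C F
      _ ≤ μ F + ε := add_le_add (measure_mono inter_subset_right) hμF
      _ ≤ (⨆ (F : Set K) (_ : F ∈ 𝓕) (_ : F ⊆ U), μ F) + ε := by
        gcongr
        exact le_iSup₂_of_le F hF (le_iSup (fun _ : F ⊆ U ↦ μ F) hFU)
  · exact iSup₂_le fun F _ ↦ iSup_le fun hFU ↦ measure_mono hFU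

end InnerApprox

theorem exists_countable_isSublattice_isClosed {K : Type*} [TopologicalSpace K]
    {S : Set (Set K)} (hS : S.Countable) (hclosed : ∀ F ∈ S, IsClosed F) :
    ∃ 𝓕 : Set (Set K), S ⊆ 𝓕 ∧ 𝓕.Countable ∧ (∀ F ∈ 𝓕, IsClosed F) ∧ IsSublattice 𝓕 ∧
      ∅ ∈ 𝓕 ∧ univ ∈ 𝓕 := by
  have halg : IsSetAlgebra (generateSetAlgebra S) := isSetAlgebra_generateSetAlgebra
  exact ⟨{F ∈ generateSetAlgebra S | IsClosed F},
    fun F hF ↦ ⟨self_subset_generateSetAlgebra hF, hclosed F hF⟩,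
    (countable_generateSetAlgebra hS).mono (sep_subset _ _), fun F hF ↦ hF.2,
    ⟨fun _ hF _ hG ↦ ⟨halg.union_mem hF.1 hG.1, hF.2.union hG.2⟩,
      fun _ hF _ hG ↦ ⟨halg.inter_mem hF.1 hG.1, hF.2.inter hG.2⟩⟩,
    ⟨halg.empty_mem, isClosed_empty⟩, ⟨halg.univ_mem, isClosed_univ⟩⟩

section EvalApprox

variable {X K E : Type*} [MeasurableSpace K] [PseudoMetricSpace E]
  {e : K → X → E} {μ : Measure K}

/-- The points of `K` are regarded as functions on `X` through `e`. On `A`, whose complement has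
measure at most `δ`, evaluation at `z` is within `δ` of evaluation at `x`. -/
structure EvalApprox (e : K → X → E) (μ : Measure K) (δ : ℝ) (x z : X) (A : Set K) : Prop where
  measure_compl_le : μ Aᶜ ≤ ENNReal.ofReal δ
  dist_le : ∀ g ∈ A, dist (e g x) (e g z) ≤ δ

theorem EvalApprox.mono {δ δ' : ℝ} {x z : X} {A : Set K} (h : EvalApprox e μ δ x z A)
    (hδ : δ ≤ δ') : EvalApprox e μ δ' x z A where
  measure_compl_le := h.measure_compl_le.trans (ENNReal.ofReal_le_ofReal hδ)
  dist_le g hg := (h.dist_le g hg).trans hδ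

theorem innerApprox_preimage_ball {𝓕 : Set (Set K)} (h𝓕 : InfClosed 𝓕) {x : X} {c : E} {ρ : ℝ}
    (hρ : 0 < ρ) (h : ∀ δ > 0, ∃ z A, EvalApprox e μ δ x z A ∧ A ∈ 𝓕 ∧
      {g | dist (e g z) c ≤ 2 * ρ} ∈ 𝓕) :
    InnerApprox μ 𝓕 {g | dist (e g x) c < ρ} {g | dist (e g x) c < 4 * ρ} := by
  intro ε hε
  obtain ⟨δ, -, hδ, hδε⟩ := ENNReal.lt_iff_exists_real_btwn.1 hε
  obtain ⟨z, A, hA, hA𝓕, hball⟩ := h (min δ ρ) (lt_min (ENNReal.ofReal_pos.1 hδ) hρ)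
  have hdist : ∀ g ∈ A, dist (e g x) (e g z) ≤ ρ := fun g hg ↦
    (hA.dist_le g hg).trans (min_le_right _ _)
  refine ⟨A ∩ {g | dist (e g z) c ≤ 2 * ρ}, h𝓕 hA𝓕 hball, ?_, ?_⟩
  · rintro g ⟨hgA, hgz : dist (e g z) c ≤ 2 * ρ⟩
    have htri := dist_triangle (e g x) (e g z) c
    change dist (e g x) c < 4 * ρ
    linarith [hdist g hgA]
  · have hsub : {g | dist (e g x) c < ρ} \ (A ∩ {g | dist (e g z) c ≤ 2 * ρ}) ⊆ Aᶜ := by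
      rintro g ⟨hgx : dist (e g x) c < ρ, hg⟩ hgA
      refine hg ⟨hgA, ?_⟩
      have htri := dist_triangle_left (e g z) c (e g x)
      change dist (e g z) c ≤ 2 * ρ
      linarith [hdist g hgA]
    calc μ _ ≤ μ Aᶜ := measure_mono hsub
      _ ≤ ENNReal.ofReal (min δ ρ) := hA.measure_compl_le
      _ ≤ ENNReal.ofReal δ := ENNReal.ofReal_le_ofReal (min_le_left _ _)
      _ ≤ ε := hδε.le

variable [TopologicalSpace K]

theorem innerApproxFilter_nhds_le_nhds (he : IsInducing e) {𝓕 : Set (Set K)}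
    (h𝓕 : InfClosed 𝓕) (huniv : univ ∈ 𝓕) {Q : Set E} (hQ : Dense Q)
    (h : ∀ x, ∀ δ > 0, ∃ z A, EvalApprox e μ δ x z A ∧ A ∈ 𝓕 ∧
      ∀ c ∈ Q, ∀ r : ℚ, {g | dist (e g z) c ≤ r} ∈ 𝓕) (g₀ : K) :
    innerApproxFilter μ h𝓕 huniv (𝓝 g₀) ≤ 𝓝 g₀ := by
  suffices htendsto : Tendsto e (innerApproxFilter μ h𝓕 huniv (𝓝 g₀)) (𝓝 (e g₀)) by
    exact (tendsto_iff_comap.1 htendsto).trans_eq (he.nhds_eq_comap g₀).symm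
  refine tendsto_pi_nhds.2 fun x ↦ Metric.tendsto_nhds.2 fun r hr ↦ ?_
  obtain ⟨ρ, hρ, hρr⟩ := exists_rat_btwn (show (0 : ℝ) < r / 5 by positivity)
  obtain ⟨c, hcQ, hc⟩ := hQ.exists_dist_lt (e g₀ x) hρ
  refine ⟨{g | dist (e g x) c < ρ}, ?_, (innerApprox_preimage_ball h𝓕 hρ fun δ hδ ↦ ?_).mono
    subset_rfl fun g (hg : dist (e g x) c < 4 * ρ) ↦ ?_⟩
  · have hcont : Continuous fun g ↦ e g x := (continuous_apply x).comp he.continuous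
    exact (isOpen_lt (hcont.dist continuous_const) continuous_const).mem_nhds hc
  · obtain ⟨z, A, hA, hA𝓕, hball⟩ := h x δ hδ
    exact ⟨z, A, hA, hA𝓕, by simpa using hball c hcQ (2 * ρ)⟩
  · have htri := dist_triangle_right (e g x) (e g₀ x) c
    change dist (e g x) (e g₀ x) < r
    linarith

theorem countablyDetermined_of_countable_evalApprox [TopologicalSpace.SeparableSpace E]
    (he : IsInducing e) [μ.Regular] {P : Set (X × Set K)} (hP : P.Countable)
    (hclosed : ∀ p ∈ P, IsClosed p.2)
    (h : ∀ x, ∀ δ > 0, ∃ p ∈ P, EvalApprox e μ δ x p.1 p.2) : CountablyDetermined μ := by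
  obtain ⟨Q, hQ, hQdense⟩ := TopologicalSpace.exists_countable_dense E
  let evalBall : X × E × ℚ → Set K := fun q ↦ {g | dist (e g q.1) q.2.1 ≤ q.2.2}
  have hevalBall : ∀ q, IsClosed (evalBall q) := fun q ↦
    isClosed_le (((continuous_apply q.1).comp he.continuous).dist continuous_const) continuous_const
  obtain ⟨𝓕, hS𝓕, hcount, h𝓕closed, h𝓕, hempty, huniv⟩ := exists_countable_isSublattice_isClosed
    (S := Prod.snd '' P ∪ evalBall '' ((Prod.fst '' P) ×ˢ Q ×ˢ univ))
    ((hP.image _).union (((hP.image _).prod (hQ.prod countable_univ)).image _))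
    (union_subset (forall_mem_image.2 hclosed) (forall_mem_image.2 fun q _ ↦ hevalBall q))
  refine countablyDetermined_of_innerApproxFilter_le_nhds hcount h𝓕closed h𝓕 hempty huniv
    (innerApproxFilter_nhds_le_nhds he h𝓕.infClosed huniv hQdense fun x δ hδ ↦ ?_)
  obtain ⟨p, hp, hpx⟩ := h x δ hδ
  exact ⟨p.1, p.2, hpx, hS𝓕 (.inl (mem_image_of_mem _ hp)), fun c hc r ↦
    hS𝓕 (.inr ⟨(p.1, c, r), ⟨mem_image_of_mem _ hp, hc, mem_univ r⟩, rfl⟩)⟩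

end EvalApprox

theorem isClosed_setOf_ediam_image_le {X K E : Type*} [TopologicalSpace K] [PseudoEMetricSpace E]
    {e : K → X → E} (he : Continuous e) (Y : Set X) (r : ℝ≥0∞) :
    IsClosed {g | Metric.ediam (e g '' Y) ≤ r} := by
  have hset : {g | Metric.ediam (e g '' Y) ≤ r} =
      ⋂ (x ∈ Y) (y ∈ Y), {g | edist (e g x) (e g y) ≤ r} := by
    ext g
    simp [Metric.ediam_le_iff]
  have heval (x : X) : Continuous fun g ↦ e g x := (continuous_apply x).comp he
  rw [hset]
  exact isClosed_biInter fun x _ ↦ isClosed_biInter fun y _ ↦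
    isClosed_le ((heval x).edist (heval y)) continuous_const

section Oscillation

variable {X K : Type*} [TopologicalSpace X] [TopologicalSpace K] [MeasurableSpace K]
  [OpensMeasurableSpace K] {e : K → X → ℝ} {μ : Measure K} [IsFiniteMeasure μ]

theorem exists_isOpen_measure_ediam_image_lt [FirstCountableTopology X] (he : Continuous e)
    {Y : Set X} {x : X} {r c : ℝ≥0∞} (h : μ {g | r ≤ osc (e g) Y x} < c) :
    ∃ V, IsOpen V ∧ x ∈ V ∧ μ {g | Metric.ediam (e g '' (V ∩ Y)) ≤ r}ᶜ < c := by
  obtain ⟨V, hV, hVbasis⟩ := (nhds_basis_opens x).exists_antitone_subbasis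
  let B : ℕ → Set K := fun n ↦ {g | Metric.ediam (e g '' (V n ∩ Y)) ≤ r}ᶜ
  have hBanti : Antitone B := fun m n hmn ↦ compl_subset_compl.2 fun g hg ↦
    (Metric.ediam_mono (image_mono (inter_subset_inter_left Y (hVbasis.antitone hmn)))).trans hg
  have hBmeas (n : ℕ) : NullMeasurableSet (B n) μ :=
    (isClosed_setOf_ediam_image_le he _ r).measurableSet.compl.nullMeasurableSet
  have hBosc : ⋂ n, B n ⊆ {g | r ≤ osc (e g) Y x} := by
    refine fun g hg ↦ show r ≤ osc (e g) Y x from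
      le_iInf₂ fun U hU ↦ le_iInf fun hxU ↦ ?_
    obtain ⟨n, hn⟩ := hVbasis.mem_iff.1 (hU.mem_nhds hxU)
    have hlt : r < Metric.ediam (e g '' (V n ∩ Y)) := not_le.1 fun hle ↦ mem_iInter.1 hg n hle
    exact hlt.le.trans (Metric.ediam_mono (image_mono (inter_subset_inter_left Y hn)))
  have hBlt : ⨅ n, μ (B n) < c := by
    rw [← hBanti.measure_iInter hBmeas ⟨0, measure_ne_top _ _⟩]
    exact (measure_mono hBosc).trans_lt h
  obtain ⟨n, hn⟩ := iInf_lt_iff.1 hBlt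
  exact ⟨V n, (hV n).2, (hV n).1, hn⟩

variable [SecondCountableTopology X]

theorem exists_countable_evalApprox_of_osc (he : Continuous e) {Y : Set X} {δ : ℝ}
    (h : ∀ x ∈ Y, μ {g | ENNReal.ofReal δ ≤ osc (e g) Y x} < ENNReal.ofReal δ) :
    ∃ P : Set (X × Set K), P.Countable ∧ (∀ p ∈ P, IsClosed p.2) ∧
      ∀ x ∈ Y, ∃ p ∈ P, EvalApprox e μ δ x p.1 p.2 := by
  choose! V hV hxV hμV using fun x hx ↦ exists_isOpen_measure_ediam_image_lt he (h x hx)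
  obtain ⟨T, hTY, hT, hYT⟩ := TopologicalSpace.countable_cover_nhdsWithin fun x hx ↦
    mem_nhdsWithin_of_mem_nhds ((hV x hx).mem_nhds (hxV x hx))
  let A : X → Set K := fun z ↦ {g | Metric.ediam (e g '' (V z ∩ Y)) ≤ ENNReal.ofReal δ}
  have hA (z : X) : IsClosed (A z) := isClosed_setOf_ediam_image_le he _ _
  refine ⟨(fun z ↦ (z, A z)) '' T, hT.image _, forall_mem_image.2 fun z _ ↦ hA z, fun x hx ↦ ?_⟩
  obtain ⟨z, hz, hxz⟩ := mem_iUnion₂.1 (hYT hx)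
  have hδ : 0 < δ := ENNReal.ofReal_pos.1 (pos_of_gt (h x hx))
  refine ⟨_, mem_image_of_mem _ hz, (hμV z (hTY hz)).le, fun g hg ↦ ?_⟩
  have hxmem : e g x ∈ e g '' (V z ∩ Y) := mem_image_of_mem _ ⟨hxz, hx⟩
  have hzmem : e g z ∈ e g '' (V z ∩ Y) := mem_image_of_mem _ ⟨hxV z (hTY hz), hTY hz⟩
  exact (edist_le_ofReal hδ.le).1 ((Metric.edist_le_ediam_of_mem hxmem hzmem).trans hg)

theorem exists_countable_evalApprox_of_iUnion_osc (he : Continuous e)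
    (h : ∀ δ : ℝ, 0 < δ → ∃ Y : ℕ → Set X, ⋃ n, Y n = univ ∧
      ∀ n, ∀ x ∈ Y n, μ {g | ENNReal.ofReal δ ≤ osc (e g) (Y n) x} < ENNReal.ofReal δ) :
    ∃ P : Set (X × Set K), P.Countable ∧ (∀ p ∈ P, IsClosed p.2) ∧
      ∀ x, ∀ δ > 0, ∃ p ∈ P, EvalApprox e μ δ x p.1 p.2 := by
  choose Y hY hosc using fun m : ℕ ↦ h (1 / (m + 1)) Nat.one_div_pos_of_nat
  choose P hP hclosed happrox using fun m n ↦ exists_countable_evalApprox_of_osc he (hosc m n)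
  refine ⟨⋃ (m) (n), P m n, countable_iUnion fun m ↦ countable_iUnion (hP m), ?_, fun x δ hδ ↦ ?_⟩
  · intro p hp
    obtain ⟨m, n, hmn⟩ := mem_iUnion₂.1 hp
    exact hclosed m n p hmn
  · obtain ⟨m, hm⟩ := exists_nat_one_div_lt hδ
    obtain ⟨n, hn⟩ := mem_iUnion.1 ((hY m).symm ▸ mem_univ x)
    obtain ⟨p, hp, hpx⟩ := happrox m n x hn
    exact ⟨p, mem_iUnion₂.2 ⟨m, n, hp⟩, hpx.mono hm.le⟩

theorem countablyDetermined_of_small_oscillation_general (he : IsInducing e) [μ.Regular]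
    (h : ∀ δ : ℝ, 0 < δ → ∃ Y : ℕ → Set X, ⋃ n, Y n = univ ∧
      ∀ n, ∀ x ∈ Y n, μ {g | ENNReal.ofReal δ ≤ osc (e g) (Y n) x} < ENNReal.ofReal δ) :
    CountablyDetermined μ :=
  let ⟨_, hP, hclosed, happrox⟩ := exists_countable_evalApprox_of_iUnion_osc he.continuous h
  countablyDetermined_of_countable_evalApprox he hP hclosed happrox

end Oscillation

theorem countablyDetermined_of_small_oscillation
    {X : Type*} [TopologicalSpace X] [TopologicalSpace.SeparableSpace X]
    [TopologicalSpace.MetrizableSpace X]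
    (K : Set (X → ℝ)) (hK : IsCompact K)
    [MeasurableSpace K] [BorelSpace K]
    (μ : Measure K) [IsProbabilityMeasure μ] [μ.Regular]
    (h : ∀ δ : ℝ, 0 < δ → ∃ Xn : ℕ → Set X, (⋃ n, Xn n) = univ ∧
      ∀ n, ∀ x ∈ Xn n,
        μ {g : K | ENNReal.ofReal δ ≤ osc (g : X → ℝ) (Xn n) x} < ENNReal.ofReal δ) :
    CountablyDetermined μ := by
  let := TopologicalSpace.metrizableSpaceMetric X
  have := UniformSpace.secondCountable_of_separable X
  exact countablyDetermined_of_small_oscillation_general IsInducing.subtypeVal h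
end

section
/- Let X be a separable metrizable space, K ⊆ ℝ^X a compact space (with the pointwise topology), and μ a Radon probability measure on K. Suppose there is a decomposition X = ⋃_{n∈ω} X_n such that for every n and every x ∈ X_n, the restriction g|X_n is continuous at x for μ-almost all g ∈ K. Then μ is countably determined. -/
/-!
The condition that a function maps a piece of `X` into a closed set is closed for the pointwise
topology. Take for the pieces the sets `Xₙ ∩ O` with `O` basic open, and for the closed sets the
closures of basic open sets of the codomain; this gives a countable family of closed subsets of `K`.
If `g` restricted to `Xₙ` is continuous at `x ∈ Xₙ` and `g x` lies in an open set `V`, then some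
member of the family contains `g` and is contained in `{f | f x ∈ V}`. So almost every point of a
subbasic open set is captured by the family, and almost every point of a basic open set by the
finite intersections of its members. Inner regularity carries this over from a basis to all open
sets, and continuity from below replaces a countable union by finite unions.
-/

open MeasureTheory Set

open TopologicalSpace Topology

section AEUnion

variable {K : Type*} [MeasurableSpace K] {μ : Measure K} {𝓕 : Set (Set K)}

/-- `U` is, up to a `μ`-null set, a union of members of `𝓕`: almost every point of `U` lies in some
member of `𝓕` contained in `U`. Such a family plays the role of a network modulo null sets. -/
def IsAEUnion (μ : Measure K) (𝓕 : Set (Set K)) (U : Set K) : Prop :=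
  ∀ᵐ g ∂μ, g ∈ U → ∃ F ∈ 𝓕, F ⊆ U ∧ g ∈ F

/-- The intersections of finitely many members of `𝓕`, in the form used by
`isTopologicalBasis_of_subbasis`. -/
def finiteInters (𝓕 : Set (Set K)) : Set (Set K) :=
  sInter '' {𝓢 | 𝓢.Finite ∧ 𝓢 ⊆ 𝓕}

theorem IsAEUnion.sInter {𝓥 : Set (Set K)} (hfin : 𝓥.Finite)
    (h : ∀ V ∈ 𝓥, IsAEUnion μ 𝓕 V) : IsAEUnion μ (finiteInters 𝓕) (⋂₀ 𝓥) := by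
  filter_upwards [(ae_ball_iff hfin.countable).mpr h] with g hg hgV
  choose! F hF hFV hgF using fun V hV ↦ hg V hV (hgV V hV)
  refine ⟨⋂₀ (F '' 𝓥), ⟨F '' 𝓥, ⟨hfin.image F, image_subset_iff.mpr hF⟩, rfl⟩, ?_, ?_⟩
  · exact fun f hf V hV ↦ hFV V hV (hf _ (mem_image_of_mem F hV))
  · exact forall_mem_image.mpr hgF

theorem IsAEUnion.measure_eq_iSup {U : Set K} (h𝓕 : 𝓕.Countable) (hU : IsAEUnion μ 𝓕 U) :
    μ U = ⨆ 𝓢 ∈ {𝓢 : Set (Set K) | 𝓢.Finite ∧ 𝓢 ⊆ {F ∈ 𝓕 | F ⊆ U}}, μ (⋃₀ 𝓢) := by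
  set 𝓖 : Set (Set K) := {F ∈ 𝓕 | F ⊆ U}
  have h𝓖 : 𝓖.Countable := h𝓕.mono (sep_subset _ _)
  have hdir : DirectedOn (Function.onFun (· ⊆ ·) sUnion) {𝓢 : Set (Set K) | 𝓢.Finite ∧ 𝓢 ⊆ 𝓖} :=
    fun 𝓢 h𝓢 𝓣 h𝓣 ↦ ⟨𝓢 ∪ 𝓣, ⟨h𝓢.1.union h𝓣.1, union_subset h𝓢.2 h𝓣.2⟩,
      sUnion_mono subset_union_left, sUnion_mono subset_union_right⟩
  rw [← measure_biUnion_eq_iSup (countable_ofPred_finite_subset h𝓖) hdir]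
  refine measure_congr (Filter.eventuallyEq_set.mpr ?_)
  filter_upwards [hU] with g hg
  refine ⟨fun hgU ↦ ?_, fun hgU ↦ ?_⟩
  · obtain ⟨F, hF, hFU, hgF⟩ := hg hgU
    exact mem_iUnion₂.mpr
      ⟨{F}, ⟨finite_singleton F, singleton_subset_iff.mpr ⟨hF, hFU⟩⟩, F, rfl, hgF⟩
  · obtain ⟨𝓢, h𝓢, F, hF, hgF⟩ := mem_iUnion₂.mp hgU
    exact (h𝓢.2 hF).2 hgF

variable [TopologicalSpace K]

theorem countablyDetermined_of_forall_isOpen_isAEUnion (h𝓕 : 𝓕.Countable)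
    (hclosed : ∀ F ∈ 𝓕, IsClosed F) (h : ∀ U, IsOpen U → IsAEUnion μ 𝓕 U) :
    CountablyDetermined μ := by
  refine ⟨sUnion '' {𝓢 | 𝓢.Finite ∧ 𝓢 ⊆ 𝓕},
    (countable_ofPred_finite_subset h𝓕).image _, ?_, fun U hU ↦ le_antisymm ?_ ?_⟩
  · rintro _ ⟨𝓢, ⟨hfin, h𝓢⟩, rfl⟩
    rw [sUnion_eq_biUnion]
    exact hfin.isClosed_biUnion fun F hF ↦ hclosed F (h𝓢 hF)
  · rw [(h U hU).measure_eq_iSup h𝓕]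
    refine iSup₂_le fun 𝓢 ⟨hfin, h𝓢⟩ ↦ ?_
    exact le_iSup₂_of_le (⋃₀ 𝓢) ⟨𝓢, ⟨hfin, h𝓢.trans (sep_subset _ _)⟩, rfl⟩
      (le_iSup_of_le (sUnion_subset fun F hF ↦ (h𝓢 hF).2) le_rfl)
  · exact iSup₂_le fun F _ ↦ iSup_le measure_mono

theorem measure_eq_zero_of_forall_mem_nhdsWithin [μ.InnerRegular] {s : Set K}
    (hs : MeasurableSet s) (h : ∀ g ∈ s, ∃ t ∈ 𝓝[s] g, μ t = 0) : μ s = 0 := by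
  rw [hs.measure_eq_iSup_isCompact]
  simp only [ENNReal.iSup_eq_zero]
  exact fun C hCs hC ↦ hC.measure_zero_of_nhdsWithin fun g hg ↦
    (h g (hCs hg)).imp fun t ht ↦ ⟨nhdsWithin_mono g hCs ht.1, ht.2⟩

variable [OpensMeasurableSpace K] [μ.InnerRegular]

theorem IsAEUnion.of_isTopologicalBasis (h𝓕 : 𝓕.Countable) (hclosed : ∀ F ∈ 𝓕, IsClosed F)
    {𝓑 : Set (Set K)} (h𝓑 : IsTopologicalBasis 𝓑) (h : ∀ B ∈ 𝓑, IsAEUnion μ 𝓕 B)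
    {U : Set K} (hU : IsOpen U) : IsAEUnion μ 𝓕 U := by
  set W : Set K := ⋃₀ {F ∈ 𝓕 | F ⊆ U}
  have hW : MeasurableSet W :=
    .sUnion (h𝓕.mono (sep_subset _ _)) fun F hF ↦ (hclosed F hF.1).measurableSet
  have hnull : μ (U \ W) = 0 := by
    refine measure_eq_zero_of_forall_mem_nhdsWithin (hU.measurableSet.diff hW) fun g hg ↦ ?_
    obtain ⟨B, hB, hgB, hBU⟩ := h𝓑.exists_subset_of_mem_open hg.1 hU
    have hBnhds : B ∈ 𝓝 g := (h𝓑.isOpen hB).mem_nhds hgB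
    refine ⟨U \ W ∩ B, inter_mem_nhdsWithin _ hBnhds, measure_eq_zero_iff_ae_notMem.mpr ?_⟩
    filter_upwards [h B hB] with f hf ⟨⟨_, hfW⟩, hfB⟩
    obtain ⟨F, hF, hFB, hfF⟩ := hf hfB
    exact hfW ⟨F, ⟨hF, hFB.trans hBU⟩, hfF⟩
  filter_upwards [measure_eq_zero_iff_ae_notMem.mp hnull] with g hg hgU
  obtain ⟨F, ⟨hF, hFU⟩, hgF⟩ := not_not.mp fun hgW ↦ hg ⟨hgU, hgW⟩
  exact ⟨F, hF, hFU, hgF⟩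

theorem countablyDetermined_of_subbasis_isAEUnion (h𝓕 : 𝓕.Countable)
    (hclosed : ∀ F ∈ 𝓕, IsClosed F) {𝓥 : Set (Set K)}
    (h𝓥 : ‹TopologicalSpace K› = generateFrom 𝓥) (h : ∀ V ∈ 𝓥, IsAEUnion μ 𝓕 V) :
    CountablyDetermined μ := by
  have hcount : (finiteInters 𝓕).Countable := (countable_ofPred_finite_subset h𝓕).image _
  have hclosed' : ∀ F ∈ finiteInters 𝓕, IsClosed F := by
    rintro _ ⟨𝓢, ⟨-, h𝓢⟩, rfl⟩
    exact isClosed_sInter fun F hF ↦ hclosed F (h𝓢 hF)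
  refine countablyDetermined_of_forall_isOpen_isAEUnion hcount hclosed' fun U hU ↦
    .of_isTopologicalBasis hcount hclosed' (isTopologicalBasis_of_subbasis h𝓥) ?_ hU
  rintro _ ⟨𝓢, ⟨hfin, h𝓢⟩, rfl⟩
  exact .sInter hfin fun V hV ↦ h V (h𝓢 hV)

end AEUnion

theorem exists_mem_basis_mapsTo_closure {X Y : Type*} [TopologicalSpace X] [TopologicalSpace Y]
    [RegularSpace Y] {𝓑 : Set (Set X)} (h𝓑 : IsTopologicalBasis 𝓑) {𝓒 : Set (Set Y)}
    (h𝓒 : IsTopologicalBasis 𝓒) {f : X → Y} {s : Set X} {x : X} (hf : ContinuousWithinAt f s x)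
    {V : Set Y} (hV : V ∈ 𝓝 (f x)) :
    ∃ O ∈ 𝓑, x ∈ O ∧ ∃ C ∈ 𝓒, closure C ⊆ V ∧ MapsTo f (s ∩ O) (closure C) := by
  obtain ⟨C, ⟨hxC, hC⟩, hCV⟩ := (h𝓒.nhds_basis_closure (f x)).mem_iff.mp hV
  have hpre : f ⁻¹' closure C ∈ 𝓝[s] x :=
    hf (Filter.mem_of_superset ((h𝓒.isOpen hC).mem_nhds hxC) subset_closure)
  obtain ⟨N, hN, hNC⟩ := mem_nhdsWithin_iff_exists_mem_nhds_inter.mp hpre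
  obtain ⟨O, hO, hxO, hON⟩ := h𝓑.mem_nhds_iff.mp hN
  exact ⟨O, hO, hxO, C, hC, hCV, fun y hy ↦ hNC ⟨hON hy.2, hy.1⟩⟩

section FunctionSpace

variable {ι K X Y : Type*} [TopologicalSpace X] [SecondCountableTopology X]
  [TopologicalSpace Y] [SecondCountableTopology Y] {φ : K → X → Y} {A : ι → Set X}

/-- For a family `φ` of functions `X → Y` indexed by `K` and a family `A` of subsets of `X`, the
sets of those indices `g` for which `φ g` maps a basic open piece of some `A n` into the closure of
a basic open set of `Y`. These are the closed sets that determine the measure on `K`, up to finite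
intersections and unions. -/
def mapsToFamily (φ : K → X → Y) (A : ι → Set X) : Set (Set K) :=
  range fun p : ι × countableBasis X × countableBasis Y ↦
    {g | MapsTo (φ g) (A p.1 ∩ p.2.1) (closure p.2.2)}

theorem countable_mapsToFamily [Countable ι] : (mapsToFamily φ A).Countable :=
  countable_range _

theorem isClosed_of_mem_mapsToFamily [TopologicalSpace K] (hφ : Continuous φ) {F : Set K}
    (hF : F ∈ mapsToFamily φ A) : IsClosed F := by
  obtain ⟨p, rfl⟩ := hF
  exact isClosed_closure.setOfPred_mapsTo fun x _ ↦ (continuous_apply x).comp hφ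

theorem isAEUnion_mapsToFamily [RegularSpace Y] [MeasurableSpace K] {μ : Measure K} {n : ι} {x : X}
    (hx : x ∈ A n) (h : ∀ᵐ g ∂μ, ContinuousWithinAt (φ g) (A n) x) {V : Set Y} (hV : IsOpen V) :
    IsAEUnion μ (mapsToFamily φ A) {g | φ g x ∈ V} := by
  filter_upwards [h] with g hg hgV
  obtain ⟨O, hO, hxO, C, hC, hCV, hgC⟩ := exists_mem_basis_mapsTo_closure
    (isBasis_countableBasis X) (isBasis_countableBasis Y) hg (hV.mem_nhds hgV)
  exact ⟨_, ⟨(n, ⟨O, hO⟩, ⟨C, hC⟩), rfl⟩, fun f hf ↦ hCV (hf ⟨hx, hxO⟩), hgC⟩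

theorem countablyDetermined_of_ae_continuous_restrictions_general [Countable ι] [RegularSpace Y]
    [TopologicalSpace K] [MeasurableSpace K] [OpensMeasurableSpace K] (hφ : IsInducing φ)
    (μ : Measure K) [μ.InnerRegular] (hA : ⋃ n, A n = univ)
    (h : ∀ n, ∀ x ∈ A n, ∀ᵐ g ∂μ, ContinuousWithinAt (φ g) (A n) x) :
    CountablyDetermined μ := by
  refine countablyDetermined_of_subbasis_isAEUnion (countable_mapsToFamily (φ := φ) (A := A))
    (fun F ↦ isClosed_of_mem_mapsToFamily hφ.continuous)
    (𝓥 := ⋃ x, {s | IsOpen[induced (φ · x) inferInstance] s}) ?_ fun s hs ↦ ?_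
  · exact hφ.eq_induced.trans ((induced_to_pi φ).trans (generateFrom_iUnion_isOpen _).symm)
  · obtain ⟨x, V, hV, rfl⟩ := mem_iUnion.mp hs
    obtain ⟨n, hx⟩ := iUnion_eq_univ_iff.mp hA x
    exact isAEUnion_mapsToFamily hx (h n x hx) hV

end FunctionSpace

theorem countablyDetermined_of_ae_continuous_restrictions
    {X : Type*} [TopologicalSpace X] [TopologicalSpace.SeparableSpace X]
    [TopologicalSpace.MetrizableSpace X]
    (K : Set (X → ℝ)) (hK : IsCompact K)
    [MeasurableSpace K] [BorelSpace K]
    (μ : Measure K) [IsProbabilityMeasure μ] [μ.Regular]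
    (h : ∃ Xn : ℕ → Set X, (⋃ n, Xn n) = univ ∧
      ∀ n, ∀ x ∈ Xn n, ∀ᵐ g ∂μ, ContinuousWithinAt (g.val : X → ℝ) (Xn n) x) :
    CountablyDetermined μ := by
  obtain ⟨Xn, hcover, hcont⟩ := h
  have : SecondCountableTopology X :=
    let := pseudoMetrizableSpacePseudoMetric X
    UniformSpace.secondCountable_of_separable X
  exact countablyDetermined_of_ae_continuous_restrictions_general .subtypeVal μ hcover hcont
end

section
/- Let T be an uncountable separable metrizable space and let 𝒜 ⊆ Fin(T) be a hereditary ccc-family such that ⋃𝒜 = T. Then there is a nonempty countable dense-in-itself set S ⊆ T such that every finite subset of S belongs to 𝒜. -/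
open Set

/-- A subset `S` of a topological space is *dense-in-itself* if it has no isolated
points in its subspace topology, i.e. every point of `S` is an accumulation point of `S`. -/
def DenseInItself {T : Type*} [TopologicalSpace T] (S : Set T) : Prop :=
  ∀ x ∈ S, x ∈ closure (S \ {x})

/-- A family `𝓐` of (finite) subsets of `T` is a *ccc-family* if for every uncountable
pairwise disjoint subfamily `𝓐₀ ⊆ 𝓐` there are distinct `a, b ∈ 𝓐₀` with `a ∪ b ∈ 𝓐`. -/
def IsCCCFamily {T : Type*} (𝓐 : Set (Set T)) : Prop :=
  ∀ 𝓐₀ ⊆ 𝓐, ¬𝓐₀.Countable → 𝓐₀.Pairwise Disjoint →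
    ∃ a ∈ 𝓐₀, ∃ b ∈ 𝓐₀, a ≠ b ∧ a ∪ b ∈ 𝓐

/-!
Call a member `b` of the family poor in `U` if it meets `U` but only countably many points of `U`
can be added to it inside the family. A maximal pairwise disjoint set of poor members with
pairwise unions outside the family is countable by the ccc; removing its union and all the points
that can be added to its members removes a countable set `C`, and no poor member avoids `C`: its
points in `U` could be added to one of the selected members. Doing this for every `U` in a
countable basis, a member avoiding `C` that meets `U` always extends to one avoiding `C` with two
points in `U`. The union of a sufficiently generic increasing sequence is then dense-in-itself.
-/

section

open TopologicalSpace

variable {T : Type*} {𝓐 : Set (Set T)}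

theorem IsCCCFamily.exists_countable_predense (hccc : IsCCCFamily 𝓐) {𝓑 : Set (Set T)}
    (h𝓑 : 𝓑 ⊆ 𝓐) :
    ∃ 𝓜 ⊆ 𝓑, 𝓜.Countable ∧
      ∀ a ∈ 𝓑, (∀ b ∈ 𝓜, Disjoint a b) → ∃ b ∈ 𝓜, a ∪ b ∈ 𝓐 := by
  let Incompatible (a b : Set T) : Prop := Disjoint a b ∧ a ∪ b ∉ 𝓐
  have incompatible_symm : Std.Symm Incompatible :=
    ⟨fun a b h ↦ ⟨h.1.symm, union_comm a b ▸ h.2⟩⟩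
  obtain ⟨𝓜, h𝓜⟩ := zorn_subset {𝓜 | 𝓜 ⊆ 𝓑 ∧ 𝓜.Pairwise Incompatible} fun c hc hchain ↦
    ⟨⋃₀ c, ⟨sUnion_subset fun s hs ↦ (hc hs).1,
      (pairwise_sUnion hchain.directedOn).2 fun s hs ↦ (hc hs).2⟩,
      fun _ ↦ subset_sUnion_of_mem⟩
  obtain ⟨h𝓜𝓑, h𝓜_incompatible⟩ := h𝓜.prop
  refine ⟨𝓜, h𝓜𝓑, ?_, fun a ha h_disj ↦ ?_⟩
  · by_contra h_unc
    obtain ⟨a, ha, b, hb, hab, h_union⟩ := hccc 𝓜 (h𝓜𝓑.trans h𝓑) h_unc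
      (h𝓜_incompatible.mono' fun _ _ ↦ And.left)
    exact (h𝓜_incompatible ha hb hab).2 h_union
  · by_contra! h_union
    have h_insert : insert a 𝓜 ∈ {𝓜 | 𝓜 ⊆ 𝓑 ∧ 𝓜.Pairwise Incompatible} :=
      ⟨insert_subset ha h𝓜𝓑, h𝓜_incompatible.insert_of_symm
        fun b hb _ ↦ ⟨h_disj b hb, h_union b hb⟩⟩
    have ha𝓜 : a ∈ 𝓜 := h𝓜.mem_of_prop_insert h_insert
    exact h_union a ha𝓜 (by simpa using h𝓑 ha)

/-- The points of `U` that can be added to `a` without leaving the family `𝓐`. Points of `a ∩ U`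
are included when `a ∈ 𝓐`, which is harmless because only the uncountability of this set matters. -/
def pointExtensions (𝓐 : Set (Set T)) (U a : Set T) : Set T :=
  {y ∈ U | insert y a ∈ 𝓐}

theorem IsCCCFamily.exists_countable_forall_not_countable_pointExtensions
    (hccc : IsCCCFamily 𝓐) (hlower : IsLowerSet 𝓐) (U : Set T) :
    ∃ C : Set T, C.Countable ∧ ∀ a ∈ 𝓐, a.Countable → Disjoint a C → (a ∩ U).Nonempty →
      ¬(pointExtensions 𝓐 U a).Countable := by
  obtain ⟨𝓜, h𝓜, h𝓜_countable, h𝓜_predense⟩ := hccc.exists_countable_predense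
    (𝓑 := {b ∈ 𝓐 | b.Countable ∧ (b ∩ U).Nonempty ∧ (pointExtensions 𝓐 U b).Countable})
    (sep_subset _ _)
  refine ⟨⋃ b ∈ 𝓜, b ∪ pointExtensions 𝓐 U b,
    h𝓜_countable.biUnion fun b hb ↦ (h𝓜 hb).2.1.union (h𝓜 hb).2.2.2,
    fun a ha ha_countable ha_disj haU ha_poor ↦ ?_⟩
  simp only [disjoint_iUnion_right, disjoint_union_right] at ha_disj
  obtain ⟨b, hb, hab⟩ := h𝓜_predense a ⟨ha, ha_countable, haU, ha_poor⟩
    fun b hb ↦ (ha_disj b hb).1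
  obtain ⟨y, hya, hyU⟩ := haU
  have hy : y ∈ pointExtensions 𝓐 U b :=
    ⟨hyU, hlower (insert_subset (.inl hya) subset_union_right) hab⟩
  exact disjoint_left.1 (ha_disj b hb).2 hya hy

theorem IsCCCFamily.exists_countable_forall_exists_insert_mem {ι : Type*} [Countable ι]
    (hccc : IsCCCFamily 𝓐) (hlower : IsLowerSet 𝓐) (U : ι → Set T) :
    ∃ C : Set T, C.Countable ∧ ∀ a ∈ 𝓐, a.Countable → Disjoint a C →
      ∀ i, (a ∩ U i).Nonempty → ∃ y ∈ U i, y ∉ a ∧ y ∉ C ∧ insert y a ∈ 𝓐 := by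
  choose C hC hC_ext using fun i ↦
    hccc.exists_countable_forall_not_countable_pointExtensions hlower (U i)
  have hC_union : (⋃ i, C i).Countable := countable_iUnion hC
  refine ⟨⋃ i, C i, hC_union, fun a ha ha_countable ha_disj i hai ↦ ?_⟩
  have h_unc := hC_ext i a ha ha_countable (disjoint_iUnion_right.1 ha_disj i) hai
  obtain ⟨y, ⟨hyU, hy⟩, hy_notMem⟩ := not_subset.1 fun h ↦
    h_unc ((ha_countable.union hC_union).mono h)
  rw [mem_union, not_or] at hy_notMem
  exact ⟨y, hyU, hy_notMem.1, hy_notMem.2, hy⟩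

theorem exists_monotone_seq_iUnion_inter_nontrivial {ι : Type*} [Countable ι] (U : ι → Set T)
    {𝓟 : Set (Set T)}
    (hext : ∀ a ∈ 𝓟, ∀ i, (a ∩ U i).Nonempty → ∃ b ∈ 𝓟, a ⊆ b ∧ (b ∩ U i).Nontrivial)
    {a₀ : Set T} (ha₀ : a₀ ∈ 𝓟) :
    ∃ s : ℕ → Set T, s 0 = a₀ ∧ Monotone s ∧ (∀ n, s n ∈ 𝓟) ∧
      ∀ i, ((⋃ n, s n) ∩ U i).Nonempty → ((⋃ n, s n) ∩ U i).Nontrivial := by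
  have : Encodable ι := Encodable.ofCountable ι
  -- `D i` is cofinal because a member either has an extension meeting `U i`, which `hext` enlarges
  -- further, or has none and then belongs to `D i` vacuously.
  let D (i : ι) : Order.Cofinal 𝓟 :=
    { carrier := {a | ∀ b ≥ a, (b.1 ∩ U i).Nonempty → (a.1 ∩ U i).Nontrivial}
      isCofinal a := by
        by_cases h : ∃ b ≥ a, (b.1 ∩ U i).Nonempty
        · obtain ⟨b, hab, hb⟩ := h
          obtain ⟨c, hc, hbc, hcU⟩ := hext b.1 b.2 i hb
          exact ⟨⟨c, hc⟩, fun _ _ _ ↦ hcU, hab.trans hbc⟩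
        · exact ⟨a, fun b hab hb ↦ (h ⟨b, hab, hb⟩).elim, le_rfl⟩ }
  let s : ℕ → 𝓟 := Order.sequenceOfCofinals ⟨a₀, ha₀⟩ D
  have hs_mono : Monotone s := Order.sequenceOfCofinals.monotone _ D
  refine ⟨fun n ↦ s n, rfl, hs_mono, fun n ↦ (s n).2, fun i ⟨x, hx, hxU⟩ ↦ ?_⟩
  obtain ⟨m, hxm⟩ := mem_iUnion.1 hx
  let n := Encodable.encode i + 1
  have hsD : s n ∈ D i := Order.sequenceOfCofinals.encode_mem _ D i
  have hxmax : x ∈ (s (max n m)).1 := hs_mono (le_max_right n m) hxm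
  exact (hsD _ (hs_mono (le_max_left n m)) ⟨x, hxmax, hxU⟩).mono
    (inter_subset_inter_left _ (subset_iUnion (fun n ↦ (s n).1) n))

theorem denseInItself_iff_inter_nontrivial [TopologicalSpace T] {B : Set (Set T)}
    (hB : IsTopologicalBasis B) {S : Set T} :
    DenseInItself S ↔ ∀ U ∈ B, (S ∩ U).Nonempty → (S ∩ U).Nontrivial := by
  simp only [DenseInItself, hB.mem_closure_iff]
  constructor
  · rintro h U hU ⟨x, hxS, hxU⟩
    obtain ⟨y, hyU, hyS, hyx⟩ := h x hxS U hU hxU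
    exact ⟨y, ⟨hyS, hyU⟩, x, ⟨hxS, hxU⟩, hyx⟩
  · intro h x hxS U hU hxU
    obtain ⟨y, ⟨hyS, hyU⟩, hyx⟩ := (h U hU ⟨x, hxS, hxU⟩).exists_ne x
    exact ⟨y, hyU, hyS, hyx⟩

theorem exists_denseInItself_of_ccc_hereditary_general [TopologicalSpace T]
    [SecondCountableTopology T] (hlower : IsLowerSet 𝓐) (hccc : IsCCCFamily 𝓐)
    (hunc : ¬(⋃₀ 𝓐).Countable) :
    ∃ S : Set T, S.Nonempty ∧ S.Countable ∧ DenseInItself S ∧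
      ∀ b ⊆ S, b.Finite → b ∈ 𝓐 := by
  obtain ⟨B, hB_countable, -, hB⟩ := exists_countable_basis T
  have : Countable B := hB_countable
  obtain ⟨C, hC, hC_ext⟩ :=
    hccc.exists_countable_forall_exists_insert_mem hlower (Subtype.val : B → Set T)
  obtain ⟨x, ⟨a, ha, hxa⟩, hxC⟩ := not_subset.1 fun h ↦ hunc (hC.mono h)
  let 𝓟 : Set (Set T) := {a ∈ 𝓐 | a.Countable ∧ Disjoint a C}
  have hx𝓟 : {x} ∈ 𝓟 :=
    ⟨hlower (singleton_subset_iff.2 hxa) ha, countable_singleton x, disjoint_singleton_left.2 hxC⟩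
  have h𝓟_ext : ∀ a ∈ 𝓟, ∀ U : B, (a ∩ U).Nonempty →
      ∃ b ∈ 𝓟, a ⊆ b ∧ (b ∩ U : Set T).Nontrivial := by
    rintro a ⟨ha, ha_countable, haC⟩ U ⟨z, hza, hzU⟩
    obtain ⟨y, hyU, hya, hyC, hy⟩ := hC_ext a ha ha_countable haC U ⟨z, hza, hzU⟩
    exact ⟨insert y a, ⟨hy, ha_countable.insert y, disjoint_insert_left.2 ⟨hyC, haC⟩⟩,
      subset_insert y a, y, ⟨mem_insert y a, hyU⟩, z, ⟨mem_insert_of_mem y hza, hzU⟩,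
      (ne_of_mem_of_not_mem hza hya).symm⟩
  obtain ⟨s, hs0, hs_mono, hs, hs_nontrivial⟩ :=
    exists_monotone_seq_iUnion_inter_nontrivial (Subtype.val : B → Set T) h𝓟_ext hx𝓟
  refine ⟨⋃ n, s n, ⟨x, mem_iUnion.2 ⟨0, hs0 ▸ rfl⟩⟩, countable_iUnion fun n ↦ (hs n).2.1,
    (denseInItself_iff_inter_nontrivial hB).2 fun U hU ↦ hs_nontrivial ⟨U, hU⟩,
    fun b hb hb_finite ↦ ?_⟩
  lift b to Finset T using hb_finite
  obtain ⟨n, hn⟩ := hs_mono.directed_le.exists_mem_subset_of_finset_subset_biUnion hb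
  exact hlower hn (hs n).1

end

theorem exists_denseInItself_of_ccc_hereditary
    {T : Type*} [TopologicalSpace T] [TopologicalSpace.SeparableSpace T]
    [TopologicalSpace.MetrizableSpace T] [Uncountable T]
    (𝓐 : Set (Set T)) (hfin : ∀ a ∈ 𝓐, a.Finite)
    (hher : ∀ a ∈ 𝓐, ∀ b ⊆ a, b ∈ 𝓐)
    (hccc : IsCCCFamily 𝓐) (hcov : ⋃₀ 𝓐 = univ) :
    ∃ S : Set T, S.Nonempty ∧ S.Countable ∧ DenseInItself S ∧
      ∀ b ⊆ S, b.Finite → b ∈ 𝓐 := by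
  let := TopologicalSpace.metrizableSpaceMetric T
  have : SecondCountableTopology T := UniformSpace.secondCountable_of_separable T
  exact exists_denseInItself_of_ccc_hereditary_general (fun a b hba ha ↦ hher a ha b hba) hccc
    (hcov ▸ not_countable_univ)
end

section
/- Let T be an uncountable separable metrizable space, K a compact Hausdorff space, and μ a Borel probability measure on K. If t ↦ L_t is any mapping from T into the family of compact subsets of K with μ(L_t) > 0 for every t ∈ T, then there exists a nonempty dense-in-itself set S ⊆ T such that ⋂_{t∈S} L_t ≠ ∅. -/
open MeasureTheory Set

/-!
Modulo null sets, the union of any subfamily of `(L t)` is a countable subunion. Fix a set `U` of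
indices. Among the measurable sets which meet only countably many `L t`, `t ∈ U`, in positive
measure, there is an almost greatest one, `B`; let `C` be the countable set of these `t` for `B`. If
countably many `L s` almost cover all `L t` with `t ∈ U` outside some countable set `E`, then the
complement of their union is almost contained in `B`, so they almost cover `L t` for every
`t ∈ U \ C`, including those in `E`. In particular such `L t` are almost covered by countably many
`L s` with `s ∈ U \ {t}`.

Doing this for all `U` in a countable basis gives a countable set `D` of indices such that almost
every `x` has the following property: if `x ∈ L t` with `t ∈ D`, then `x ∈ L s` for some
`s ∈ D \ {t}` arbitrarily close to `t`. So `{t ∈ D | x ∈ L t}` is dense-in-itself for almost every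
`x`, and it remains to choose such an `x` in `⋃ t ∈ D, L t`.
-/

section AEUnion

variable {ι α : Type*} [MeasurableSpace α] {μ : Measure α} [SFinite μ] {f : ι → Set α}

theorem exists_countable_ae_le_biUnion {I : Set ι} (hf : ∀ i ∈ I, NullMeasurableSet (f i) μ) :
    ∃ D ⊆ I, D.Countable ∧ ∀ i ∈ I, f i ≤ᵐ[μ] ⋃ j ∈ D, f j := by
  choose! g _ hgf using fun i hi => (hf i hi).exists_measurable_superset_ae_eq
  have hgm : ∀ s ∈ g '' I, MeasurableSet s := forall_mem_image.2 fun i hi => (hgf i hi).1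
  obtain ⟨𝒟, h𝒟I, h𝒟c, h𝒟⟩ := Measure.exists_ae_subset_biUnion_countable μ hgm
  obtain ⟨D, hDI, hDg⟩ := SurjOn.exists_bijOn_subset h𝒟I
  have hDc : D.Countable := countable_of_injective_of_countable_image hDg.injOn
    (hDg.image_eq ▸ h𝒟c)
  have hgD : ⋃₀ 𝒟 =ᵐ[μ] ⋃ j ∈ D, f j := by
    rw [← hDg.image_eq, sUnion_image]
    exact Filter.EventuallyEq.countable_bUnion hDc fun j hj => (hgf j (hDI hj)).2
  exact ⟨D, hDI, hDc, fun i hi =>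
    (hgf i hi).2.symm.le.trans <| (h𝒟 _ (mem_image_of_mem g hi)).trans hgD.le⟩

variable (μ f) in
theorem exists_ae_greatest_countable_not_aedisjoint (I : Set ι) :
    ∃ B, {i ∈ I | ¬AEDisjoint μ (f i) B}.Countable ∧
      ∀ A, NullMeasurableSet A μ → {i ∈ I | ¬AEDisjoint μ (f i) A}.Countable → A ≤ᵐ[μ] B := by
  obtain ⟨𝒟, h𝒟, h𝒟c, hmax⟩ := exists_countable_ae_le_biUnion (μ := μ) (f := id)
    (I := {A | NullMeasurableSet A μ ∧ {i ∈ I | ¬AEDisjoint μ (f i) A}.Countable})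
    fun _ hA => hA.1
  refine ⟨⋃ A ∈ 𝒟, A, ?_, fun A hA hAc => hmax A ⟨hA, hAc⟩⟩
  refine (h𝒟c.biUnion fun A hA => (h𝒟 hA).2).mono ?_
  rintro i ⟨hiI, hi⟩
  contrapose! hi
  have hdisj : ∀ A ∈ 𝒟, AEDisjoint μ (f i) A := by simpa [hiI] using hi
  simpa only [AEDisjoint, inter_iUnion₂, measure_biUnion_null_iff h𝒟c] using hdisj

theorem exists_countable_forall_exists_ae_le_biUnion (hf : ∀ i, NullMeasurableSet (f i) μ)
    (I : Set ι) :
    ∃ C : Set ι, C.Countable ∧ ∀ E : Set ι, E.Countable →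
      ∃ D ⊆ I \ E, D.Countable ∧ ∀ i ∈ I \ C, f i ≤ᵐ[μ] ⋃ j ∈ D, f j := by
  obtain ⟨B, hBc, hBmax⟩ := exists_ae_greatest_countable_not_aedisjoint μ f I
  refine ⟨_, hBc, fun E hE => ?_⟩
  obtain ⟨D, hDE, hDc, hD⟩ := exists_countable_ae_le_biUnion (I := I \ E) fun i _ => hf i
  refine ⟨D, hDE, hDc, fun i hi => ?_⟩
  have aedisjoint_compl_iff (s t : Set α) : AEDisjoint μ s tᶜ ↔ s ≤ᵐ[μ] t := by
    rw [AEDisjoint, ae_le_set, sdiff_eq]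
  -- The complement of the union is almost disjoint from `f j` unless `j ∈ E`.
  have hcompl : (⋃ j ∈ D, f j)ᶜ ≤ᵐ[μ] B := by
    refine hBmax _ (NullMeasurableSet.biUnion hDc fun j _ => hf j).compl (hE.mono ?_)
    rintro j ⟨hjI, hj⟩
    contrapose! hj
    exact (aedisjoint_compl_iff _ _).2 (hD j ⟨hjI, hj⟩)
  have hdisj : AEDisjoint μ (f i) B := by
    by_contra h
    exact hi.2 ⟨hi.1, h⟩
  exact (aedisjoint_compl_iff _ _).1 (hdisj.mono_ae .rfl hcompl)

theorem exists_countable_forall_exists_ae_le_biUnion_sdiff_singleton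
    (hf : ∀ i, NullMeasurableSet (f i) μ) (I : Set ι) :
    ∃ C : Set ι, C.Countable ∧ ∀ E : Set ι, E.Countable →
      ∃ D ⊆ I \ E, D.Countable ∧ ∀ i ∈ I \ C, f i ≤ᵐ[μ] ⋃ j ∈ D \ {i}, f j := by
  obtain ⟨C, hC, hcover⟩ := exists_countable_forall_exists_ae_le_biUnion hf I
  refine ⟨C, hC, fun E hE => ?_⟩
  -- Of two disjoint covering sets of indices, at least one avoids any given index.
  obtain ⟨D₀, hD₀, hD₀c, hcover₀⟩ := hcover E hE
  obtain ⟨D₁, hD₁, hD₁c, hcover₁⟩ := hcover (E ∪ D₀) (hE.union hD₀c)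
  refine ⟨D₀ ∪ D₁, by grind, hD₀c.union hD₁c, fun i hi => ?_⟩
  by_cases hiD₀ : i ∈ D₀
  · have hsub : D₁ ⊆ (D₀ ∪ D₁) \ {i} := by grind
    exact (hcover₁ i hi).trans (biUnion_subset_biUnion_left hsub).eventuallyLE
  · have hsub : D₀ ⊆ (D₀ ∪ D₁) \ {i} := by grind
    exact (hcover₀ i hi).trans (biUnion_subset_biUnion_left hsub).eventuallyLE

theorem exists_countable_forall_mem_ae_le_biUnion_inter_sdiff_singleton
    (hf : ∀ i, NullMeasurableSet (f i) μ) {𝒰 : Set (Set ι)} (h𝒰 : 𝒰.Countable) :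
    ∃ C D : Set ι, C.Countable ∧ D.Countable ∧ Disjoint D C ∧
      ∀ U ∈ 𝒰, ∀ i ∈ U \ C, f i ≤ᵐ[μ] ⋃ j ∈ (D ∩ U) \ {i}, f j := by
  choose C hC hcover using
    exists_countable_forall_exists_ae_le_biUnion_sdiff_singleton (μ := μ) hf
  have hCc : (⋃ U ∈ 𝒰, C U).Countable := h𝒰.biUnion fun U _ => hC U
  choose D hDU hDc hD using fun U => hcover U _ hCc
  refine ⟨_, ⋃ U ∈ 𝒰, D U, hCc, h𝒰.biUnion fun U _ => hDc U,
    disjoint_iUnion₂_left.2 fun U _ => disjoint_sdiff_left.mono_left (hDU U),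
    fun U hU i hi => ?_⟩
  have hiC : i ∈ U \ C U := ⟨hi.1, fun h => hi.2 (mem_biUnion hU h)⟩
  have hsub : D U \ {i} ⊆ ((⋃ V ∈ 𝒰, D V) ∩ U) \ {i} :=
    sdiff_subset_sdiff_left fun j hj => ⟨mem_biUnion hU hj, (hDU U hj).1⟩
  exact (hD U i hiC).trans (biUnion_subset_biUnion_left hsub).eventuallyLE

end AEUnion

section DenseInItself

variable {T α : Type*} [TopologicalSpace T] [SecondCountableTopology T] [MeasurableSpace α]
  {μ : Measure α} [SFinite μ] {L : T → Set α}

theorem exists_countable_ae_denseInItself (hL : ∀ t, NullMeasurableSet (L t) μ) :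
    ∃ D : Set T, {t | ¬L t ≤ᵐ[μ] ⋃ s ∈ D, L s}.Countable ∧
      ∀ᵐ x ∂μ, DenseInItself {t ∈ D | x ∈ L t} := by
  have hb := TopologicalSpace.isBasis_countableBasis T
  have hbc := TopologicalSpace.countable_countableBasis T
  obtain ⟨C, D, hC, hDc, hDC, hcover⟩ :=
    exists_countable_forall_mem_ae_le_biUnion_inter_sdiff_singleton hL hbc
  refine ⟨D, hC.mono fun t ht => ?_, ?_⟩
  · by_contra htC
    obtain ⟨U, hU, htU, -⟩ := hb.exists_subset_of_mem_open (mem_univ t) isOpen_univ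
    have hsub : (D ∩ U) \ {t} ⊆ D := sdiff_subset.trans inter_subset_left
    exact ht ((hcover U hU t ⟨htU, htC⟩).trans (biUnion_subset_biUnion_left hsub).eventuallyLE)
  · have hae : ∀ᵐ x ∂μ, ∀ t ∈ D, ∀ U ∈ TopologicalSpace.countableBasis T, t ∈ U → x ∈ L t →
        x ∈ ⋃ s ∈ (D ∩ U) \ {t}, L s := by
      refine (ae_ball_iff hDc).2 fun t ht => (ae_ball_iff hbc).2 fun U hU => ?_
      refine Filter.eventually_imp_distrib_left.2 fun htU => ?_
      exact hcover U hU t ⟨htU, disjoint_left.1 hDC ht⟩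
    filter_upwards [hae] with x hx t ht
    refine hb.mem_closure_iff.2 fun U hU htU => ?_
    obtain ⟨s, ⟨⟨hsD, hsU⟩, hst⟩, hxs⟩ := mem_iUnion₂.1 (hx t ht.1 U hU htU ht.2)
    exact ⟨s, hsU, ⟨hsD, hxs⟩, hst⟩

variable (μ L) in
theorem exists_denseInItself_inter_nonempty_general (hL : ∀ t, NullMeasurableSet (L t) μ)
    (hpos : ¬{t | 0 < μ (L t)}.Countable) :
    ∃ S : Set T, S.Nonempty ∧ DenseInItself S ∧ (⋂ t ∈ S, L t).Nonempty := by
  obtain ⟨D, hDc, hD⟩ := exists_countable_ae_denseInItself hL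
  obtain ⟨t₀, ht₀pos, ht₀⟩ : ∃ t₀, 0 < μ (L t₀) ∧ L t₀ ≤ᵐ[μ] ⋃ s ∈ D, L s := by
    by_contra! h
    exact hpos (hDc.mono h)
  have hfreq : ∃ᶠ x in ae μ, x ∈ L t₀ := frequently_ae_mem_iff.2 ht₀pos.ne'
  obtain ⟨x, hx₀, hxD, hxdense⟩ := (hfreq.and_eventually (ht₀.and hD)).exists
  obtain ⟨s, hsD, hxs⟩ := mem_iUnion₂.1 (hxD hx₀)
  exact ⟨{t ∈ D | x ∈ L t}, ⟨s, hsD, hxs⟩, hxdense, x, mem_iInter₂.2 fun _ ht => ht.2⟩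

end DenseInItself

theorem exists_denseInItself_inter_nonempty
    {T : Type*} [TopologicalSpace T] [TopologicalSpace.SeparableSpace T]
    [TopologicalSpace.MetrizableSpace T] [Uncountable T]
    {K : Type*} [TopologicalSpace K] [CompactSpace K] [T2Space K]
    [MeasurableSpace K] [BorelSpace K]
    (μ : Measure K) [IsProbabilityMeasure μ]
    (L : T → Set K) (hLcpt : ∀ t, IsCompact (L t)) (hLpos : ∀ t, 0 < μ (L t)) :
    ∃ S : Set T, S.Nonempty ∧ DenseInItself S ∧ (⋂ t ∈ S, L t).Nonempty := by
  let := TopologicalSpace.metrizableSpaceMetric T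
  have := UniformSpace.secondCountable_of_separable T
  exact exists_denseInItself_inter_nonempty_general μ L
    (fun t => (hLcpt t).measurableSet.nullMeasurableSet)
    (by simpa [hLpos] using not_countable_univ (α := T))
end

section
/- Let μ be the standard product probability measure on K = 2^ω and fix a sequence (I_n)_{n≥1} of pairwise disjoint subsets of ω with |I_n| = n+1 for every n ≥ 1. For a finite set I ⊆ ω and φ : I → 2 let C(I,φ) = {x ∈ 2^ω : x(i) = φ(i) for all i ∈ I}, and for t ∈ 2^ω set L_t = 2^ω \ ⋃_{n≥1} C(I_n, t|I_n). Then: (i) μ(L_t) ≥ 1/2 for every t ∈ 2^ω; (ii) every set S ⊆ 2^ω with ⋂_{s∈S} L_s ≠ ∅ is nowhere dense in 2^ω. (Hence the dense-in-itself conclusion in the preceding caliber theorem cannot be strengthened to 'not nowhere dense'.) -/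
open MeasureTheory Set

/-!
Both parts rest on the complement of each `L t` being a union of cylinders.

For the measure bound, these cylinders have total measure `∑ n ≥ 1, 2⁻⁽ⁿ⁺¹⁾ = 1/2`.

For the topological part, agreement on a set of coordinates is a symmetric relation, so
`x ∈ L s ↔ s ∈ L x`; a common point `x` of the sets `L s` with `s ∈ S` thus means `S ⊆ L x`.
The set `L x` is closed, and its complement is dense: as the sets `I n` leave every finite set of
coordinates, overwriting `y` by `x` on `I n` gives points outside `L x` that converge to `y`.
-/

open Filter Topology
open scoped ENNReal

theorem tsum_half_pow_add_succ (k : ℕ) :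
    ∑' n : ℕ, (1 / 2 : ℝ≥0∞) ^ (n + (k + 1)) = (1 / 2) ^ k := by
  have half_mul_two : (2⁻¹ : ℝ≥0∞) * 2 = 1 :=
    ENNReal.inv_mul_cancel two_ne_zero ENNReal.ofNat_ne_top
  simp only [one_div, pow_add _ _ (k + 1), ENNReal.tsum_mul_right, ENNReal.tsum_geometric_two]
  rw [pow_succ', ← mul_assoc, mul_comm 2, half_mul_two, one_mul]

section Cylinders

variable {ι κ : Type*} {X : ι → Type*}

/-- The cylinder of points agreeing with `t` on the coordinates in `J`. It is `C(J, t|J)`, encoded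
by a total point `t` in place of a function on `J`. -/
def agreementCylinder (J : Finset ι) (t : ∀ i, X i) : Set (∀ i, X i) :=
  {x | ∀ i ∈ J, x i = t i}

/-- The set `L_t` of points that disagree with `t` somewhere on each `I k`, for an
arbitrary family `I`. -/
def avoidingSet (I : κ → Finset ι) (t : ∀ i, X i) : Set (∀ i, X i) :=
  (⋃ k, agreementCylinder (I k) t)ᶜ

theorem mem_agreementCylinder_comm {J : Finset ι} {x t : ∀ i, X i} :
    x ∈ agreementCylinder J t ↔ t ∈ agreementCylinder J x :=
  forall₂_congr fun _ _ => eq_comm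

theorem mem_avoidingSet_comm {I : κ → Finset ι} {x t : ∀ i, X i} :
    x ∈ avoidingSet I t ↔ t ∈ avoidingSet I x := by
  simp only [avoidingSet, mem_compl_iff, mem_iUnion, mem_agreementCylinder_comm (x := x)]

theorem mem_iInter_avoidingSet_iff_subset {I : κ → Finset ι} {S : Set (∀ i, X i)} {x : ∀ i, X i} :
    x ∈ ⋂ s ∈ S, avoidingSet I s ↔ S ⊆ avoidingSet I x :=
  mem_iInter₂.trans <| forall₂_congr fun _ _ => mem_avoidingSet_comm

theorem univ_sdiff_iUnion_one_le_agreementCylinder (I : ℕ → Finset ι) (t : ∀ i, X i) :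
    univ \ ⋃ (n : ℕ) (_ : 1 ≤ n), agreementCylinder (I n) t =
      avoidingSet (fun n => I (n + 1)) t := by
  rw [avoidingSet, compl_eq_univ_sdiff,
    ← iUnion_ge_eq_iUnion_nat_add (fun n => agreementCylinder (I n) t)]

theorem one_sub_tsum_le_measure_avoidingSet [Countable κ] [MeasurableSpace (∀ i, X i)]
    (μ : Measure (∀ i, X i)) [IsProbabilityMeasure μ] (I : κ → Finset ι) (t : ∀ i, X i) :
    1 - ∑' k, μ (agreementCylinder (I k) t) ≤ μ (avoidingSet I t) := by
  rw [tsub_le_iff_left]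
  calc 1 = μ univ := measure_univ.symm
    _ ≤ μ (⋃ k, agreementCylinder (I k) t) + μ (avoidingSet I t) := measure_univ_le_add_compl _
    _ ≤ ∑' k, μ (agreementCylinder (I k) t) + μ (avoidingSet I t) := by
      gcongr
      exact measure_iUnion_le _

theorem finite_setOf_mem_of_pairwise_disjoint {I : κ → Finset ι}
    (hI : Pairwise fun j k => Disjoint (I j) (I k)) (i : ι) : {k | i ∈ I k}.Finite :=
  Subsingleton.finite fun _ hj _ hk => hI.eq (Finset.not_disjoint_iff.2 ⟨i, hj, hk⟩)

section Topology

variable [∀ i, TopologicalSpace (X i)]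

theorem isOpen_agreementCylinder [∀ i, DiscreteTopology (X i)] (J : Finset ι) (t : ∀ i, X i) :
    IsOpen (agreementCylinder J t) :=
  isOpen_set_pi J.finite_toSet fun i _ => isOpen_discrete {t i}

theorem tendsto_piecewise_cofinite [DecidableEq ι] {I : κ → Finset ι}
    (hI : ∀ i, {k | i ∈ I k}.Finite) (x y : ∀ i, X i) :
    Tendsto (fun k => (I k).piecewise x y) cofinite (𝓝 y) := by
  refine tendsto_pi_nhds.2 fun i => tendsto_const_nhds.congr' ?_
  filter_upwards [(hI i).eventually_cofinite_notMem] with k hk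
  exact ((I k).piecewise_eq_of_notMem x y hk).symm

theorem dense_iUnion_agreementCylinder [Infinite κ] {I : κ → Finset ι}
    (hI : ∀ i, {k | i ∈ I k}.Finite) (t : ∀ i, X i) :
    Dense (⋃ k, agreementCylinder (I k) t) := by
  classical
  intro y
  refine mem_closure_of_tendsto (tendsto_piecewise_cofinite hI t y) (.of_forall fun k => ?_)
  exact mem_iUnion.2 ⟨k, fun _ hi => (I k).piecewise_eq_of_mem t y hi⟩

theorem isNowhereDense_avoidingSet [∀ i, DiscreteTopology (X i)] [Infinite κ] {I : κ → Finset ι}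
    (hI : ∀ i, {k | i ∈ I k}.Finite) (t : ∀ i, X i) : IsNowhereDense (avoidingSet I t) := by
  refine (isClosed_isNowhereDense_iff_compl.2 ?_).2
  rw [avoidingSet, compl_compl]
  exact ⟨isOpen_iUnion fun k => isOpen_agreementCylinder (I k) t,
    dense_iUnion_agreementCylinder hI t⟩

end Topology

end Cylinders

theorem cantor_example_nowhereDense_general {ι : Type*} {X : ι → Type*}
    [∀ i, TopologicalSpace (X i)] [∀ i, DiscreteTopology (X i)] [MeasurableSpace (∀ i, X i)]
    (μ : Measure (∀ i, X i)) [IsProbabilityMeasure μ] (I : ℕ → Finset ι)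
    (hμ : ∀ n t, μ (agreementCylinder (I n) t) ≤ (1 / 2) ^ (n + 2))
    (hI : ∀ i, {n | i ∈ I n}.Finite) :
    (∀ t, 1 / 2 ≤ μ (avoidingSet I t)) ∧
    (∀ S : Set (∀ i, X i), (⋂ s ∈ S, avoidingSet I s).Nonempty → IsNowhereDense S) := by
  refine ⟨fun t => ?_, fun S ⟨x, hx⟩ => ?_⟩
  · calc (1 / 2 : ℝ≥0∞) = 1 - 1 / 2 := by rw [one_div, ENNReal.one_sub_inv_two]
      _ = 1 - ∑' n : ℕ, (1 / 2) ^ (n + 2) := by rw [tsum_half_pow_add_succ 1, pow_one]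
      _ ≤ 1 - ∑' n, μ (agreementCylinder (I n) t) := by gcongr with n; exact hμ n t
      _ ≤ μ (avoidingSet I t) := one_sub_tsum_le_measure_avoidingSet μ I t
  · exact (isNowhereDense_avoidingSet hI x).mono (mem_iInter_avoidingSet_iff_subset.1 hx)

theorem cantor_example_nowhereDense
    (μ : Measure (ℕ → Bool)) [IsProbabilityMeasure μ]
    (hμ : ∀ (I : Finset ℕ) (φ : ℕ → Bool),
      μ {x : ℕ → Bool | ∀ i ∈ I, x i = φ i} = (1 / 2 : ENNReal) ^ I.card)
    (I : ℕ → Finset ℕ)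
    (hdisj : ∀ m n, 1 ≤ m → 1 ≤ n → m ≠ n → Disjoint (I m) (I n))
    (hcard : ∀ n, 1 ≤ n → (I n).card = n + 1)
    (L : (ℕ → Bool) → Set (ℕ → Bool))
    (hL : ∀ t, L t =
      univ \ ⋃ (n : ℕ) (_ : 1 ≤ n), {x : ℕ → Bool | ∀ i ∈ I n, x i = t i}) :
    (∀ t, (1 / 2 : ENNReal) ≤ μ (L t)) ∧
    (∀ S : Set (ℕ → Bool), (⋂ s ∈ S, L s).Nonempty → IsNowhereDense S) := by
  obtain rfl : L = avoidingSet (fun n => I (n + 1)) :=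
    funext fun t => (hL t).trans (univ_sdiff_iUnion_one_le_agreementCylinder I t)
  exact cantor_example_nowhereDense_general μ (fun n => I (n + 1))
    (fun n t => by rw [agreementCylinder, hμ, hcard (n + 1) n.succ_pos])
    (finite_setOf_mem_of_pairwise_disjoint fun m n hmn =>
      hdisj _ _ m.succ_pos n.succ_pos (Nat.succ_injective.ne hmn))
end

section
/- Let μ be a probability measure on a measurable space K. Suppose {(L^0_ξ, L^1_ξ) : ξ < ω₁} is a family of pairs of disjoint measurable subsets of K such that for some constant ε > 0: (i) μ(L^0_ξ) + μ(L^1_ξ) > 1 − ε/2 for every ξ < ω₁, and (ii) μ(L^0_ξ ∩ L^1_η) ≥ ε whenever ξ, η < ω₁ with ξ ≠ η. Let 𝒜 be the family of those finite sets a ⊆ ω₁ for which {(L^0_ξ, L^1_ξ) : ξ ∈ a} is μ-independent. Then there exist an uncountable set T ⊆ ω₁ and a hereditary ccc-family 𝒜₀ ⊆ 𝒜 consisting of subsets of T such that ⋃𝒜₀ = T. -/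
open MeasureTheory Set

/-- The family of pairs `(L ξ false, L ξ true)`, `ξ ∈ a`, is `μ`-independent: every
intersection `⋂_{ξ ∈ a} L ξ (φ ξ)` has positive `μ`-measure. -/
def MuIndependent {K ι : Type*} [MeasurableSpace K] (μ : Measure K)
    (L : ι → Bool → Set K) (a : Set ι) : Prop :=
  ∀ φ : ι → Bool, 0 < μ (⋂ ξ ∈ a, L ξ (φ ξ))

/-! Well-order uncountably many indices in type `ω₁` and let `ℱ α` be the σ-algebra generated by the
pairs with index below `α`. The envelope of `α₁ < ⋯ < αₙ` is the event in `ℱ α₁` that, conditionally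
on `ℱ α₁`, both sides of the first pair meet the envelope of `α₂ < ⋯ < αₙ` with positive
probability; the family consists of the finite sets whose envelope has positive measure.

Since `ℱ` is continuous at limits and each `ℱ α` is countably generated, a closing-off argument
shows that among events `H η ∈ ℱ η` uncountably many are close to a single event. For the hulls of
`L η false`, hypothesis (ii) then forces all but one of the corresponding singletons into the
family. For the hulls of the envelopes of disjoint members, the stability of envelopes under small
perturbations allows the envelope of a lower member to be continued into that of a higher one. -/

open Filter
open scoped ENNReal symmDiff

section EssentialHull

variable {K : Type*} {m m' m₀ : MeasurableSpace K} {μ : Measure[m₀] K} {A F G H s : Set K}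

/-- `EssLE m μ F G` says that every `m`-measurable set that is almost disjoint from `G` is almost
disjoint from `F`: as far as `m` can tell, `F` is almost contained in `G`. -/
def EssLE (m : MeasurableSpace K) {m₀ : MeasurableSpace K} (μ : Measure[m₀] K) (F G : Set K) :
    Prop :=
  ∀ t, MeasurableSet[m] t → μ (t ∩ G) = 0 → μ (t ∩ F) = 0

lemma essLE_of_subset (h : F ⊆ G) : EssLE m μ F G :=
  fun _ _ ht₀ => measure_mono_null (inter_subset_inter_right _ h) ht₀

lemma EssLE.trans (hFG : EssLE m μ F G) (hGH : EssLE m μ G H) : EssLE m μ F H :=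
  fun t ht ht₀ => hFG t ht (hGH t ht ht₀)

lemma EssLE.anti (h : EssLE m μ F G) (hm : m' ≤ m) : EssLE m' μ F G :=
  fun t ht => h t (hm t ht)

lemma EssLE.inter_left (h : EssLE m μ F G) (hs : MeasurableSet[m] s) :
    EssLE m μ (s ∩ F) (s ∩ G) := by
  intro t ht ht₀
  rw [← inter_assoc] at ht₀ ⊢
  exact h _ (ht.inter hs) ht₀

lemma EssLE.measure_pos (h : EssLE m μ F G) (hF : 0 < μ F) : 0 < μ G := by
  refine pos_iff_ne_zero.2 fun hG => hF.ne' ?_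
  simpa only [univ_inter] using h univ MeasurableSet.univ (by rwa [univ_inter])

/-- The essential hull of `A` in the sub-σ-algebra `m`: the almost surely smallest `m`-measurable
set containing almost all of `A`. It is encoded as the support of the conditional probability
of `A` given `m`. -/
noncomputable def essHull (hm : m ≤ m₀) (μ : Measure[m₀] K) (A : Set K) : Set K :=
  {x | ((μ.restrict A).trim hm).rnDeriv (μ.trim hm) x ≠ 0}

lemma measurableSet_essHull (hm : m ≤ m₀) : MeasurableSet[m] (essHull hm μ A) :=
  (Measure.measurable_rnDeriv _ _) (measurableSet_singleton 0).compl

section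

variable [IsFiniteMeasure μ]

lemma measure_inter_essHull_eq_zero_iff (hm : m ≤ m₀) (hs : MeasurableSet[m] s) :
    μ (s ∩ essHull hm μ A) = 0 ↔ μ (s ∩ A) = 0 := by
  have hac : (μ.restrict A).trim hm ≪ μ.trim hm :=
    Measure.restrict_le_self.absolutelyContinuous.trim hm
  have hsupport := withDensity_apply_eq_zero (μ := μ.trim hm) (s := s)
    (Measure.measurable_rnDeriv ((μ.restrict A).trim hm) (μ.trim hm))
  rw [Measure.withDensity_rnDeriv_eq _ _ hac, trim_measurableSet_eq hm hs,
    Measure.restrict_apply (hm _ hs)] at hsupport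
  rw [hsupport, inter_comm,
    ← trim_measurableSet_eq hm ((measurableSet_essHull (A := A) hm).inter hs)]
  rfl

lemma essHull_essLE (hm : m ≤ m₀) : EssLE m μ (essHull hm μ A) A :=
  fun _ ht => (measure_inter_essHull_eq_zero_iff hm ht).2

lemma EssLE.ae_le_essHull (hm : m ≤ m₀) (h : EssLE m μ F G) : F ≤ᵐ[μ] essHull hm μ G := by
  have hcompl : MeasurableSet[m] (essHull hm μ G)ᶜ := (measurableSet_essHull hm).compl
  rw [ae_le_set, sdiff_eq, inter_comm]
  refine h _ hcompl ((measure_inter_essHull_eq_zero_iff hm hcompl).1 ?_)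
  rw [compl_inter_self, measure_empty]

lemma ae_le_essHull (hm : m ≤ m₀) : A ≤ᵐ[μ] essHull hm μ A :=
  (essLE_of_subset Subset.rfl).ae_le_essHull hm

end

lemma essLE_of_ae_le (h : F ≤ᵐ[μ] G) : EssLE m μ F G :=
  fun _ _ ht₀ => measure_mono_null_ae (EventuallyLE.rfl.inter h) ht₀

lemma exists_pos_forall_measure_lt_of_absolutelyContinuous {μ ν : Measure[m] K}
    [IsFiniteMeasure μ] [SigmaFinite ν] (h : μ ≪ ν) {κ : ℝ≥0∞} (hκ : κ ≠ 0) :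
    ∃ δ > 0, ∀ s, ν s < δ → μ s < κ := by
  have hfin : ∫⁻ x, μ.rnDeriv ν x ∂ν ≠ ∞ := (Measure.lintegral_rnDeriv_lt_top μ ν).ne
  obtain ⟨δ, hδ, hsmall⟩ := exists_pos_setLIntegral_lt_of_measure_lt hfin hκ
  refine ⟨δ, hδ, fun s hs => ?_⟩
  rw [← Measure.setLIntegral_rnDeriv h]
  exact hsmall s hs

lemma exists_pos_forall_measure_inter_essHull_lt [IsFiniteMeasure μ] (hm : m ≤ m₀) (A : Set K)
    {κ : ℝ≥0∞} (hκ : κ ≠ 0) :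
    ∃ δ > 0, ∀ t, MeasurableSet[m] t → μ (t ∩ A) < δ → μ (t ∩ essHull hm μ A) < κ := by
  have htrim : ∀ {t} (B : Set K), MeasurableSet[m] t → (μ.restrict B).trim hm t = μ (t ∩ B) :=
    fun B ht => by rw [trim_measurableSet_eq hm ht, Measure.restrict_apply (hm _ ht)]
  have hac : (μ.restrict (essHull hm μ A)).trim hm ≪ (μ.restrict A).trim hm := by
    refine Measure.AbsolutelyContinuous.mk fun t ht ht₀ => ?_
    rw [htrim _ ht] at ht₀ ⊢
    exact essHull_essLE hm t ht ht₀
  obtain ⟨δ, hδ, hsmall⟩ := exists_pos_forall_measure_lt_of_absolutelyContinuous hac hκ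
  refine ⟨δ, hδ, fun t ht => ?_⟩
  simpa only [htrim _ ht] using hsmall t

end EssentialHull

section Envelope

variable {K ι : Type*} {m : MeasurableSpace K} [mK : MeasurableSpace K]

/-- The σ-algebra of the events known before every index in `l`. -/
abbrev initialAlgebra [Preorder ι] (ℱ : Filtration ι mK) (l : List ι) : MeasurableSpace K :=
  ⨅ x ∈ l, ℱ x

/-- One backward step of the envelope recursion: the points at which, given `ℱ α`, both
`L α false` and `L α true` still have a positive conditional chance of meeting `B`. -/
noncomputable def envelopeStep [Preorder ι] (ℱ : Filtration ι mK) (μ : Measure K)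
    (L : ι → Bool → Set K) (α : ι) (B : Set K) : Set K :=
  ⋂ i, essHull (ℱ.le α) μ (L α i ∩ B)

/-- The envelope of `B` along a list of indices, to be read for an increasing list: the event, known
before the first index, that whatever the choices `L x (φ x)` for `x ∈ l`, they can be made one
after the other, with positive conditional probability, so as to end up in `B`. -/
noncomputable def envelope [Preorder ι] (ℱ : Filtration ι mK) (μ : Measure K)
    (L : ι → Bool → Set K) (l : List ι) (B : Set K) : Set K :=
  l.foldr (envelopeStep ℱ μ L) B

section Preorder

variable [Preorder ι] {ℱ : Filtration ι mK} {μ : Measure K} {L : ι → Bool → Set K}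
  {α : ι} {l : List ι} {B C X : Set K}

lemma initialAlgebra_cons_le : initialAlgebra ℱ (α :: l) ≤ ℱ α :=
  iInf₂_le α List.mem_cons_self

lemma initialAlgebra_cons_le_tail : initialAlgebra ℱ (α :: l) ≤ initialAlgebra ℱ l :=
  biInf_mono fun _ => List.mem_cons_of_mem α

lemma le_initialAlgebra (h : ∀ x ∈ l, α < x) : ℱ α ≤ initialAlgebra ℱ l :=
  le_iInf₂ fun x hx => ℱ.mono (h x hx).le

lemma measurableSet_initialAlgebra (hL : ∀ ⦃α β⦄, α < β → ∀ i, MeasurableSet[ℱ β] (L α i))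
    (h : ∀ x ∈ l, α < x) (i : Bool) : MeasurableSet[initialAlgebra ℱ l] (L α i) := by
  simp only [MeasurableSpace.measurableSet_iInf]
  exact fun x hx => hL (h x hx) i

variable [IsFiniteMeasure μ]

lemma envelopeStep_essLE_inter (h : EssLE m μ B X) (hm : ℱ α ≤ m) {i : Bool}
    (hL : MeasurableSet[m] (L α i)) : EssLE (ℱ α) μ (envelopeStep ℱ μ L α B) (L α i ∩ X) :=
  (essLE_of_subset (iInter_subset _ i)).trans
    ((essHull_essLE (ℱ.le α)).trans ((h.inter_left hL).anti hm))

lemma envelopeStep_essLE_envelopeStep (h : EssLE m μ B C) (hm : ℱ α ≤ m)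
    (hL : ∀ i, MeasurableSet[m] (L α i)) :
    EssLE (ℱ α) μ (envelopeStep ℱ μ L α B) (envelopeStep ℱ μ L α C) := by
  have hull : ∀ i, envelopeStep ℱ μ L α B ≤ᵐ[μ] essHull (ℱ.le α) μ (L α i ∩ C) :=
    fun i => (envelopeStep_essLE_inter h hm (hL i)).ae_le_essHull (ℱ.le α)
  refine essLE_of_ae_le ?_
  filter_upwards [ae_all_iff.2 hull] with x hx hxB
  exact mem_iInter.2 fun i => hx i hxB

/-- If `P` misses little of `C` inside `H`, then for each `i` the part of the hull of `L α i ∩ C`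
lying in `H` and outside the hull of `L α i ∩ P` is `ℱ α`-measurable and meets `L α i ∩ C` in a
small set; hence it is small. -/
lemma exists_pos_forall_measure_envelopeStep_sdiff_lt (α : ι) (C : Set K) {κ : ℝ≥0∞}
    (hκ : κ ≠ 0) :
    ∃ δ > 0, ∀ H P, MeasurableSet[ℱ α] H → μ ((C ∩ H) \ P) < δ →
      μ ((envelopeStep ℱ μ L α C ∩ H) \ envelopeStep ℱ μ L α P) < κ := by
  have hhull := fun i => exists_pos_forall_measure_inter_essHull_lt (μ := μ) (ℱ.le α) (L α i ∩ C)
    (ENNReal.half_pos hκ).ne'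
  choose δ hδ hsmall using hhull
  refine ⟨min (δ false) (δ true), lt_min (hδ _) (hδ _), fun H P hH hP => ?_⟩
  let D : Bool → Set K := fun i => H \ essHull (ℱ.le α) μ (L α i ∩ P)
  have hD : ∀ i, μ (D i ∩ essHull (ℱ.le α) μ (L α i ∩ C)) < κ / 2 := by
    refine fun i => hsmall i _ (hH.diff (measurableSet_essHull _)) ?_
    have hnull := ae_le_set.1 (ae_le_essHull (μ := μ) (A := L α i ∩ P) (ℱ.le α))
    calc μ (D i ∩ (L α i ∩ C))
        ≤ μ ((C ∩ H) \ P ∪ (L α i ∩ P) \ essHull (ℱ.le α) μ (L α i ∩ P)) := by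
          refine measure_mono fun x hx => ?_
          simp only [D, mem_inter_iff, mem_union, Set.mem_sdiff] at hx ⊢
          tauto
      _ ≤ μ ((C ∩ H) \ P) + 0 := hnull ▸ measure_union_le _ _
      _ < δ i := by
          rw [add_zero]
          exact hP.trans_le (by cases i <;> simp)
  calc μ ((envelopeStep ℱ μ L α C ∩ H) \ envelopeStep ℱ μ L α P)
      ≤ μ (⋃ i, D i ∩ essHull (ℱ.le α) μ (L α i ∩ C)) := by
        refine measure_mono fun x hx => ?_
        simp only [D, envelopeStep, Set.mem_sdiff, mem_inter_iff, mem_iInter, mem_iUnion,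
          not_forall] at hx ⊢
        obtain ⟨⟨hC, hxH⟩, i, hi⟩ := hx
        exact ⟨i, ⟨hxH, hi⟩, hC i⟩
    _ ≤ ∑ i, μ (D i ∩ essHull (ℱ.le α) μ (L α i ∩ C)) := measure_iUnion_fintype_le _ _
    _ < κ / 2 + κ / 2 := by
        rw [Fintype.sum_bool]
        exact ENNReal.add_lt_add (hD true) (hD false)
    _ = κ := ENNReal.add_halves κ

lemma exists_pos_forall_measure_envelope_sdiff_lt (l : List ι) (C : Set K) {κ : ℝ≥0∞}
    (hκ : κ ≠ 0) :
    ∃ δ > 0, ∀ H P, MeasurableSet[initialAlgebra ℱ l] H → μ ((C ∩ H) \ P) < δ →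
      μ ((envelope ℱ μ L l C ∩ H) \ envelope ℱ μ L l P) < κ := by
  induction l generalizing κ with
  | nil => exact ⟨κ, pos_iff_ne_zero.2 hκ, fun _ _ _ hP => hP⟩
  | cons α l ih =>
    obtain ⟨δ, hδ, hstep⟩ := exists_pos_forall_measure_envelopeStep_sdiff_lt (ℱ := ℱ) (μ := μ)
      (L := L) α (envelope ℱ μ L l C) hκ
    obtain ⟨δ', hδ', htail⟩ := ih hδ.ne'
    exact ⟨δ', hδ', fun H P hH hP => hstep H _ (initialAlgebra_cons_le H hH)
      (htail H P (initialAlgebra_cons_le_tail H hH) hP)⟩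

end Preorder

section LinearOrder

variable [LinearOrder ι] {ℱ : Filtration ι mK} {μ : Measure K} [IsFiniteMeasure μ]
  {L : ι → Bool → Set K} {γ : ι} {l l' : List ι} {B C : Set K}

lemma envelope_essLE_of_sublist (hL : ∀ ⦃α β⦄, α < β → ∀ i, MeasurableSet[ℱ β] (L α i))
    (hl : l.Pairwise (· < ·)) (h : l'.Sublist l) :
    EssLE (initialAlgebra ℱ l) μ (envelope ℱ μ L l B) (envelope ℱ μ L l' B) := by
  induction h with
  | slnil => exact essLE_of_subset Subset.rfl
  | @cons l' l α _ ih =>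
    obtain ⟨hα, hl⟩ := List.pairwise_cons.1 hl
    exact ((envelopeStep_essLE_inter (ih hl) (le_initialAlgebra hα)
      (measurableSet_initialAlgebra hL hα false)).trans
        (essLE_of_subset inter_subset_right)).anti initialAlgebra_cons_le
  | @cons_cons l' l α _ ih =>
    obtain ⟨hα, hl⟩ := List.pairwise_cons.1 hl
    exact (envelopeStep_essLE_envelopeStep (ih hl) (le_initialAlgebra hα)
      (measurableSet_initialAlgebra hL hα)).anti initialAlgebra_cons_le

lemma envelope_essLE_iInter (hL : ∀ ⦃α β⦄, α < β → ∀ i, MeasurableSet[ℱ β] (L α i))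
    (hl : l.Pairwise (· < ·)) (φ : ι → Bool) :
    EssLE (initialAlgebra ℱ l) μ (envelope ℱ μ L l B) (⋂ x ∈ l, L x (φ x)) := by
  induction l with
  | nil => exact essLE_of_subset (by simp)
  | cons α l ih =>
    obtain ⟨hα, hl⟩ := List.pairwise_cons.1 hl
    have hcons : ⋂ x ∈ α :: l, L x (φ x) = L α (φ α) ∩ ⋂ x ∈ l, L x (φ x) := by
      simp only [List.mem_cons, iInter_iInter_eq_or_left]
    rw [hcons]
    exact (envelopeStep_essLE_inter (ih hl) (le_initialAlgebra hα)
      (measurableSet_initialAlgebra hL hα (φ α))).anti initialAlgebra_cons_le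

lemma envelope_essLE_envelope (hL : ∀ ⦃α β⦄, α < β → ∀ i, MeasurableSet[ℱ β] (L α i))
    (hl : (l ++ [γ]).Pairwise (· < ·)) (h : EssLE (ℱ γ) μ B C) :
    EssLE (initialAlgebra ℱ (l ++ [γ])) μ (envelope ℱ μ L l B) (envelope ℱ μ L l C) := by
  induction l with
  | nil => exact h.anti initialAlgebra_cons_le
  | cons α l ih =>
    obtain ⟨hα, hl⟩ := List.pairwise_cons.1 hl
    exact (envelopeStep_essLE_envelopeStep (ih hl) (le_initialAlgebra hα)
      (measurableSet_initialAlgebra hL hα)).anti initialAlgebra_cons_le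

lemma exists_pos_forall_measure_envelope_pos (hpos : 0 < μ (envelope ℱ μ L l univ)) :
    ∃ δ > 0, ∀ H P, MeasurableSet[initialAlgebra ℱ l] H → μ (envelope ℱ μ L l univ \ H) < δ →
      μ (H \ P) < δ → 0 < μ (envelope ℱ μ L l P) := by
  have hκ := ENNReal.half_pos hpos.ne'
  obtain ⟨δ, hδ, hsmall⟩ :=
    exists_pos_forall_measure_envelope_sdiff_lt (ℱ := ℱ) (μ := μ) (L := L) l univ hκ.ne'
  refine ⟨min δ (μ (envelope ℱ μ L l univ) / 2), lt_min hδ hκ, fun H P hH hEH hHP => ?_⟩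
  have hdiff := hsmall H P hH (by rw [univ_inter]; exact hHP.trans_le (min_le_left _ _))
  refine pos_iff_ne_zero.2 fun hzero => lt_irrefl (μ (envelope ℱ μ L l univ)) ?_
  calc μ (envelope ℱ μ L l univ)
      ≤ μ (envelope ℱ μ L l univ ∩ H) + μ (envelope ℱ μ L l univ \ H) :=
        measure_le_inter_add_sdiff _ _ _
    _ = μ ((envelope ℱ μ L l univ ∩ H) \ envelope ℱ μ L l P) +
          μ (envelope ℱ μ L l univ \ H) := by rw [measure_sdiff_null hzero]
    _ < μ (envelope ℱ μ L l univ) / 2 + μ (envelope ℱ μ L l univ) / 2 :=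
        ENNReal.add_lt_add hdiff (hEH.trans_le (min_le_right _ _))
    _ = μ (envelope ℱ μ L l univ) := ENNReal.add_halves _

end LinearOrder

end Envelope

section Uncountable

lemma exists_pos_not_countable_setOf_lt {X : Type*} {s : Set X} (hs : ¬s.Countable)
    {f : X → ℝ≥0∞} (hf : ∀ x ∈ s, 0 < f x) : ∃ ε > 0, ¬{x ∈ s | ε < f x}.Countable := by
  by_contra! hcountable
  refine hs ((countable_iUnion fun n : ℕ =>
    hcountable (n : ℝ≥0∞)⁻¹ (by simp)).mono fun x hx => ?_)
  obtain ⟨n, hn⟩ := ENNReal.exists_inv_nat_lt (hf x hx).ne'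
  exact mem_iUnion.2 ⟨n, hx, hn⟩

variable {ι : Type*} [LinearOrder ι]

lemma exists_mem_forall_lt_of_not_countable (hc : ∀ x : ι, (Iio x).Countable) {U S : Set ι}
    (hU : ¬U.Countable) (hS : S.Countable) : ∃ η ∈ U, ∀ x ∈ S, x < η := by
  have hbounded : (⋃ x ∈ S, Iic x).Countable := hS.biUnion fun x _ => by
    rw [← Iio_insert]
    exact (hc x).insert x
  by_contra! h
  refine hU (hbounded.mono fun η hη => ?_)
  obtain ⟨x, hx, hηx⟩ := h η hη
  exact mem_biUnion hx hηx

lemma exists_mem_nonempty_subset_Ici {𝓓 : Set (Set ι)} (h𝓓 : ¬𝓓.Countable)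
    (hdisj : 𝓓.Pairwise Disjoint) {η : ι} (hη : (Iio η).Countable) :
    ∃ a ∈ 𝓓, a.Nonempty ∧ a ⊆ Ici η := by
  by_contra! h
  have hmeet : ∀ a ∈ 𝓓 \ {∅}, ∃ x ∈ a, x < η := by
    intro a ha
    simpa only [not_subset, mem_Ici, not_le] using h a ha.1 (nonempty_iff_ne_empty.2 ha.2)
  have : Nonempty ι := ⟨η⟩
  choose! p hpa hpη using hmeet
  have hinj : InjOn p (𝓓 \ {∅}) := fun a ha b hb hab =>
    hdisj.eq ha.1 hb.1 (not_disjoint_iff.2 ⟨p a, hpa a ha, hab ▸ hpa b hb⟩)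
  have hmaps : MapsTo p (𝓓 \ {∅}) (Iio η) := hpη
  have hcountable : (𝓓 \ {∅}).Countable := hmaps.countable_of_injOn hinj hη
  exact h𝓓 (by simpa using hcountable.insert ∅)

end Uncountable

section EnvelopeFamily

variable {K ι : Type*} [mK : MeasurableSpace K] [LinearOrder ι]

/-- The finite sets whose increasing enumeration has an envelope of positive measure. This is the
hereditary ccc-family of independent sets that the theorem asks for. -/
def envelopeFamily (ℱ : Filtration ι mK) (μ : Measure K) (L : ι → Bool → Set K) : Set (Set ι) :=
  {a | ∃ l : List ι, l.Pairwise (· < ·) ∧ {x | x ∈ l} = a ∧ 0 < μ (envelope ℱ μ L l univ)}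

/-- A measure-theoretic pressing-down principle: up to a prescribed error, uncountably many members
of a predictable family of events agree with a single event known at one time `β`. -/
def HasPressingDown (ℱ : Filtration ι mK) (μ : Measure K) : Prop :=
  ∀ H : ι → Set K, (∀ η, MeasurableSet[ℱ η] (H η)) → ∀ δ > (0 : ℝ≥0∞),
    ∃ β A, MeasurableSet[ℱ β] A ∧ ¬{η | μ (H η ∆ A) < δ}.Countable

variable {ℱ : Filtration ι mK} {μ : Measure K} {L : ι → Bool → Set K} {a b : Set ι}

lemma finite_of_mem_envelopeFamily (ha : a ∈ envelopeFamily ℱ μ L) : a.Finite := by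
  obtain ⟨l, -, rfl, -⟩ := ha
  exact l.finite_toSet

lemma singleton_mem_envelopeFamily {ξ : ι} (h : 0 < μ (envelopeStep ℱ μ L ξ univ)) :
    {ξ} ∈ envelopeFamily ℱ μ L :=
  ⟨[ξ], List.pairwise_singleton _ _, by simp, h⟩

variable [IsFiniteMeasure μ]

lemma muIndependent_of_mem_envelopeFamily
    (hL : ∀ ⦃α β⦄, α < β → ∀ i, MeasurableSet[ℱ β] (L α i)) (ha : a ∈ envelopeFamily ℱ μ L) :
    MuIndependent μ L a := by
  obtain ⟨l, hl, rfl, hpos⟩ := ha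
  exact fun φ => (envelope_essLE_iInter hL hl φ).measure_pos hpos

lemma mem_envelopeFamily_of_subset
    (hL : ∀ ⦃α β⦄, α < β → ∀ i, MeasurableSet[ℱ β] (L α i)) (ha : a ∈ envelopeFamily ℱ μ L)
    (hba : b ⊆ a) : b ∈ envelopeFamily ℱ μ L := by
  classical
  obtain ⟨l, hl, rfl, hpos⟩ := ha
  have hsub : (l.filter (· ∈ b)).Sublist l := List.filter_sublist
  refine ⟨l.filter (· ∈ b), hl.sublist hsub, ?_,
    (envelope_essLE_of_sublist hL hl hsub).measure_pos hpos⟩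
  ext x
  simpa using fun hx => hba hx

lemma exists_pos_forall_measure_envelope_append_pos
    (hL : ∀ ⦃α β⦄, α < β → ∀ i, MeasurableSet[ℱ β] (L α i)) {l : List ι}
    (hpos : 0 < μ (envelope ℱ μ L l univ)) :
    ∃ δ > 0, ∀ l' α γ H, (l ++ [γ]).Pairwise (· < ·) → MeasurableSet[initialAlgebra ℱ l] H →
      μ (essHull (ℱ.le α) μ (envelope ℱ μ L l univ) ∆ H) < δ →
      μ (essHull (ℱ.le γ) μ (envelope ℱ μ L l' univ) ∆ H) < δ →
      0 < μ (envelope ℱ μ L (l ++ l') univ) := by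
  obtain ⟨δ, hδ, hstable⟩ := exists_pos_forall_measure_envelope_pos hpos
  refine ⟨δ, hδ, fun l' α γ H hl hH hα hγ => ?_⟩
  have hpos' := hstable H (essHull (ℱ.le γ) μ (envelope ℱ μ L l' univ)) hH
    ((measure_mono_ae ((ae_le_essHull (ℱ.le α)).diff EventuallyLE.rfl)).trans_lt
      ((measure_mono subset_union_left).trans_lt hα))
    ((measure_mono subset_union_right).trans_lt hγ)
  rw [envelope, List.foldr_append]
  exact (envelope_essLE_envelope hL hl (essHull_essLE (ℱ.le γ))).measure_pos hpos'

/-- The hulls of the envelopes of uncountably many members are close to one event `H`; so any two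
of those members, one lying above the other, can be amalgamated. -/
theorem isCCCFamily_envelopeFamily (hc : ∀ x : ι, (Iio x).Countable)
    (hL : ∀ ⦃α β⦄, α < β → ∀ i, MeasurableSet[ℱ β] (L α i)) (hpress : HasPressingDown ℱ μ) :
    IsCCCFamily (envelopeFamily ℱ μ L) := by
  intro 𝓓 h𝓓 hunc hdisj
  choose! l hsorted hmem hpos using fun a (ha : a ∈ 𝓓) => h𝓓 ha
  choose! δ hδ hamalg using fun a (ha : a ∈ 𝓓) =>
    exists_pos_forall_measure_envelope_append_pos hL (hpos a ha)
  obtain ⟨ε, hε, hunc⟩ := exists_pos_not_countable_setOf_lt hunc hδ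
  choose a ha hne hge using fun η => exists_mem_nonempty_subset_Ici hunc
    (hdisj.mono (sep_subset _ _)) (hc η)
  have hlist : ∀ {η x}, x ∈ l (a η) ↔ x ∈ a η := fun {η x} =>
    Set.ext_iff.1 (hmem (a η) (ha η).1) x
  let P : ι → Set K := fun η => essHull (ℱ.le η) μ (envelope ℱ μ L (l (a η)) univ)
  obtain ⟨β, H, hH, hclose⟩ := hpress P (fun η => measurableSet_essHull (ℱ.le η)) ε hε
  obtain ⟨ξ, hξ, hβξ⟩ := exists_mem_forall_lt_of_not_countable hc hclose (countable_singleton β)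
  have hfin : (a ξ).Finite := finite_of_mem_envelopeFamily (h𝓓 (ha ξ).1)
  obtain ⟨η, hη, hξη⟩ := exists_mem_forall_lt_of_not_countable hc hclose hfin.countable
  have hHmeas : MeasurableSet[initialAlgebra ℱ (l (a ξ))] H :=
    le_initialAlgebra (fun x hx => (hβξ β rfl).trans_le (hge ξ (hlist.1 hx))) H hH
  have hsorted' : (l (a ξ) ++ [η]).Pairwise (· < ·) := List.pairwise_append.2
    ⟨hsorted _ (ha ξ).1, List.pairwise_singleton _ _, fun x hx y hy =>
      (hξη x (hlist.1 hx)).trans_eq (List.mem_singleton.1 hy).symm⟩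
  refine ⟨a ξ, (ha ξ).1, a η, (ha η).1, fun heq => ?_, l (a ξ) ++ l (a η), ?_, ?_,
    hamalg _ (ha ξ).1 _ ξ η H hsorted' hHmeas (hξ.trans (ha ξ).2) (hη.trans (ha ξ).2)⟩
  · obtain ⟨x, hx⟩ := hne ξ
    exact (hξη x hx).not_ge (hge η (heq ▸ hx))
  · exact List.pairwise_append.2 ⟨hsorted _ (ha ξ).1, hsorted _ (ha η).1, fun x hx y hy =>
      (hξη x (hlist.1 hx)).trans_le (hge η (hlist.1 hy))⟩
  · ext x
    simp only [List.mem_append, hlist, mem_union, Set.mem_ofPred_eq]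

/-- If `{η}` is not in the family, the hulls of `L η false` and `L η true` are almost disjoint. -/
lemma measure_inter_le_of_notMem_envelopeFamily {ξ η : ι} (hη : {η} ∉ envelopeFamily ℱ μ L)
    (A : Set K) :
    μ (L ξ false ∩ L η true) ≤ μ (essHull (ℱ.le ξ) μ (L ξ false) ∆ A) +
      μ (essHull (ℱ.le η) μ (L η false) ∆ A) := by
  have hnull : μ (⋂ i, essHull (ℱ.le η) μ (L η i)) = 0 := by
    by_contra hpos
    refine hη (singleton_mem_envelopeFamily (pos_iff_ne_zero.2 ?_))
    simpa only [envelopeStep, inter_univ] using hpos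
  have hsub : (essHull (ℱ.le ξ) μ (L ξ false) ∩ essHull (ℱ.le η) μ (L η true) : Set K) ⊆
      essHull (ℱ.le ξ) μ (L ξ false) ∆ A ∪ essHull (ℱ.le η) μ (L η false) ∆ A ∪
        ⋂ i, essHull (ℱ.le η) μ (L η i) := by
    intro x
    simp only [mem_inter_iff, mem_union, Set.mem_symmDiff, mem_iInter, Bool.forall_bool]
    tauto
  calc μ (L ξ false ∩ L η true)
      ≤ μ (essHull (ℱ.le ξ) μ (L ξ false) ∩ essHull (ℱ.le η) μ (L η true)) :=
        measure_mono_ae ((ae_le_essHull (ℱ.le ξ)).inter (ae_le_essHull (ℱ.le η)))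
    _ ≤ μ (essHull (ℱ.le ξ) μ (L ξ false) ∆ A ∪ essHull (ℱ.le η) μ (L η false) ∆ A) + 0 :=
        (measure_mono hsub).trans (hnull ▸ measure_union_le _ _)
    _ ≤ _ := by
        rw [add_zero]
        exact measure_union_le _ _

theorem not_countable_sUnion_envelopeFamily (hpress : HasPressingDown ℱ μ) {ε : ℝ≥0∞}
    (hε : ε ≠ 0) (h2 : ∀ ξ η, ξ ≠ η → ε ≤ μ (L ξ false ∩ L η true)) :
    ¬(⋃₀ envelopeFamily ℱ μ L).Countable := by
  intro hcountable
  obtain ⟨β, A, -, hclose⟩ := hpress (fun η => essHull (ℱ.le η) μ (L η false))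
    (fun η => measurableSet_essHull (ℱ.le η)) (ε / 2) (ENNReal.half_pos hε)
  let U : Set ι := {η | μ (essHull (ℱ.le η) μ (L η false) ∆ A) < ε / 2}
  have hU : ¬(U \ ⋃₀ envelopeFamily ℱ μ L).Countable := fun h => hclose (h.of_sdiff hcountable)
  obtain ⟨ξ, hξ, η, hη, hne⟩ : (U \ ⋃₀ envelopeFamily ℱ μ L).Nontrivial :=
    not_subsingleton_iff.1 fun h => hU h.countable
  have hη' : {η} ∉ envelopeFamily ℱ μ L := fun h =>
    hη.2 (mem_sUnion_of_mem (mem_singleton η) h)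
  refine (h2 ξ η hne).not_gt ?_
  calc μ (L ξ false ∩ L η true) ≤ _ := measure_inter_le_of_notMem_envelopeFamily hη' A
    _ < ε / 2 + ε / 2 := ENNReal.add_lt_add hξ.1 hη.1
    _ = ε := ENNReal.add_halves ε

end EnvelopeFamily

section Approximation

variable {K : Type*} {m₀ m : MeasurableSpace K} {μ : Measure[m₀] K} [IsFiniteMeasure μ]

lemma exists_mem_measure_symmDiff_lt (hm : m ≤ m₀) {𝒞 : Set (Set K)}
    (h𝒞 : (μ.trim hm).MeasureDense 𝒞) {s : Set K} (hs : MeasurableSet[m] s) {δ : ℝ≥0∞}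
    (hδ : 0 < δ) : ∃ A ∈ 𝒞, μ (s ∆ A) < δ := by
  obtain ⟨r, -, hr, hrδ⟩ := ENNReal.lt_iff_exists_real_btwn.1 hδ
  obtain ⟨A, hA, hlt⟩ := h𝒞.approx s hs (measure_ne_top _ _) r (ENNReal.ofReal_pos.1 hr)
  rw [trim_measurableSet_eq hm (hs.symmDiff (h𝒞.measurable A hA))] at hlt
  exact ⟨A, hA, hlt.trans hrδ⟩

lemma measureDense_iUnion_measurableSet {ν : Measure[m] K} [IsFiniteMeasure ν]
    {u : ℕ → MeasurableSpace K} (hu : Monotone u) (hm : m = ⨆ n, u n) :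
    ν.MeasureDense (⋃ n, {t | MeasurableSet[u n] t}) := by
  refine Measure.MeasureDense.of_generateFrom_isSetAlgebra_finite ν ⟨?_, ?_, ?_⟩
    (hm.trans (MeasurableSpace.generateFrom_iUnion_measurableSet u).symm)
  · exact mem_iUnion.2 ⟨0, @MeasurableSet.empty _ (u 0)⟩
  · intro t ht
    obtain ⟨n, hn⟩ := mem_iUnion.1 ht
    exact mem_iUnion.2 ⟨n, MeasurableSet.compl hn⟩
  · intro t t' ht ht'
    obtain ⟨n, hn⟩ := mem_iUnion.1 ht
    obtain ⟨k, hk⟩ := mem_iUnion.1 ht'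
    exact mem_iUnion.2 ⟨max n k, MeasurableSet.union (hu (le_max_left n k) _ hn)
      (hu (le_max_right n k) _ hk)⟩

lemma exists_measurableSet_measure_symmDiff_lt_of_iSup {u : ℕ → MeasurableSpace K}
    (hu : Monotone u) (hm : ∀ n, u n ≤ m₀) {s : Set K} (hs : MeasurableSet[⨆ n, u n] s)
    {δ : ℝ≥0∞} (hδ : 0 < δ) : ∃ n A, MeasurableSet[u n] A ∧ μ (s ∆ A) < δ := by
  obtain ⟨A, hA, hlt⟩ := exists_mem_measure_symmDiff_lt (μ := μ) (iSup_le hm)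
    (measureDense_iUnion_measurableSet hu rfl) hs hδ
  obtain ⟨n, hn⟩ := mem_iUnion.1 hA
  exact ⟨n, A, hn, hlt⟩

/-- A countable dense family of `m`-measurable sets reduces the uncountably many `A` to countably
many. -/
lemma countable_setOf_exists_measure_symmDiff_lt (hm : m ≤ m₀)
    [@MeasurableSpace.CountablyGenerated K m] {ι : Type*} {H : ι → Set K} {δ : ℝ≥0∞}
    (hcountable : ∀ A, MeasurableSet[m] A → {η | μ (H η ∆ A) < δ}.Countable) :
    {η | ∃ A, MeasurableSet[m] A ∧ μ (H η ∆ A) < δ / 2}.Countable := by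
  rcases eq_or_ne δ 0 with rfl | hδ
  · simp
  obtain ⟨𝒞, h𝒞, hdense⟩ := exists_countable_measureDense (μ := μ.trim hm)
  refine (h𝒞.biUnion fun A hA => hcountable A (hdense.measurable A hA)).mono ?_
  rintro η ⟨A, hA, hlt⟩
  obtain ⟨A', hA', hlt'⟩ := exists_mem_measure_symmDiff_lt hm hdense hA (ENNReal.half_pos hδ)
  refine mem_biUnion hA' ?_
  calc μ (H η ∆ A') ≤ μ (H η ∆ A) + μ (A ∆ A') := measure_symmDiff_le _ _ _
    _ < δ / 2 + δ / 2 := ENNReal.add_lt_add hlt hlt'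
    _ = δ := ENNReal.add_halves δ

end Approximation

section PressingDown

variable {K ι : Type*} [mK : MeasurableSpace K] {μ : Measure K} [IsFiniteMeasure μ]
  [LinearOrder ι] [WellFoundedLT ι]

lemma exists_isLUB_range_of_countable [Uncountable ι] (hc : ∀ x : ι, (Iio x).Countable)
    (u : ℕ → ι) : ∃ b, IsLUB (range u) b := by
  obtain ⟨b, -, hb⟩ :=
    exists_mem_forall_lt_of_not_countable hc not_countable_univ (countable_range u)
  have hne : (upperBounds (range u)).Nonempty := ⟨b, fun x hx => (hb x hx).le⟩
  exact ⟨_, wellFounded_lt.min_mem _ hne, fun c hc => wellFounded_lt.min_le hc⟩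

/-- Iterating a function that dominates all indices close to a set known at time `β`, one reaches
a limit `b`; by continuity the event at time `b` is close to a set known at a time below `b`. -/
theorem hasPressingDown_of_le_iSup [Uncountable ι] (hc : ∀ x : ι, (Iio x).Countable)
    {ℱ : Filtration ι mK} (hgen : ∀ β, @MeasurableSpace.CountablyGenerated K (ℱ β))
    (hcont : ∀ (u : ℕ → ι) b, StrictMono u → IsLUB (range u) b → ℱ b ≤ ⨆ n, ℱ (u n)) :
    HasPressingDown ℱ μ := by
  intro H hH δ hδ
  by_contra! hcountable
  have hbound : ∀ β, ∃ β' > β, ∀ A, MeasurableSet[ℱ β] A → ∀ η, μ (H η ∆ A) < δ / 2 → η < β' := by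
    intro β
    obtain ⟨β', -, hβ'⟩ := exists_mem_forall_lt_of_not_countable hc not_countable_univ
      ((countable_setOf_exists_measure_symmDiff_lt (ℱ.le β) (hcountable β)).insert β)
    exact ⟨β', hβ' β (mem_insert _ _), fun A hA η hη =>
      hβ' η (mem_insert_of_mem _ ⟨A, hA, hη⟩)⟩
  choose f hlt hf using hbound
  obtain ⟨x₀⟩ : Nonempty ι := inferInstance
  let u : ℕ → ι := fun n => f^[n] x₀
  have hu_succ : ∀ n, u (n + 1) = f (u n) := fun n => Function.iterate_succ_apply' f n x₀
  have hu : StrictMono u := strictMono_nat_of_lt_succ fun n => hu_succ n ▸ hlt (u n)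
  obtain ⟨b, hb⟩ := exists_isLUB_range_of_countable hc u
  obtain ⟨n, A, hA, hAb⟩ := exists_measurableSet_measure_symmDiff_lt_of_iSup (μ := μ)
    (fun i j hij => ℱ.mono (hu.monotone hij)) (fun n => ℱ.le (u n))
    (hcont u b hu hb _ (hH b)) (ENNReal.half_pos hδ.ne')
  have hbu : b < u (n + 1) := hu_succ n ▸ hf (u n) A hA b hAb
  exact hbu.not_ge (hb.1 (mem_range_self (n + 1)))

end PressingDown

section PastFiltration

variable {K ι : Type*} [mK : MeasurableSpace K] [LinearOrder ι] {L : ι → Bool → Set K}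

/-- The filtration of the strict past: time `α` knows the pairs with index below `α`. -/
def pastFiltration (L : ι → Bool → Set K) (hmeas : ∀ ξ i, MeasurableSet (L ξ i)) :
    Filtration ι mK where
  seq α := MeasurableSpace.generateFrom (⋃ x ∈ Iio α, range (L x))
  mono' _ _ h :=
    MeasurableSpace.generateFrom_mono (biUnion_subset_biUnion_left (Iio_subset_Iio h))
  le' _ := MeasurableSpace.generateFrom_le <| by
    simp only [mem_iUnion, mem_range]
    rintro _ ⟨x, -, i, rfl⟩
    exact hmeas x i

variable {hmeas : ∀ ξ i, MeasurableSet (L ξ i)}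

lemma measurableSet_pastFiltration {α β : ι} (h : α < β) (i : Bool) :
    MeasurableSet[pastFiltration L hmeas β] (L α i) :=
  MeasurableSpace.measurableSet_generateFrom (mem_biUnion h (mem_range_self i))

lemma pastFiltration_le_iSup {u : ℕ → ι} {b : ι} (hb : IsLUB (range u) b) :
    pastFiltration L hmeas b ≤ ⨆ n, pastFiltration L hmeas (u n) := by
  refine MeasurableSpace.generateFrom_le ?_
  simp only [mem_iUnion, mem_range]
  rintro _ ⟨x, hx, i, rfl⟩
  obtain ⟨_, ⟨n, rfl⟩, hn⟩ := (lt_isLUB_iff hb).1 hx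
  exact le_iSup (fun n => pastFiltration L hmeas (u n)) n _ (measurableSet_pastFiltration hn i)

lemma countablyGenerated_pastFiltration {β : ι} (hβ : (Iio β).Countable) :
    @MeasurableSpace.CountablyGenerated K (pastFiltration L hmeas β) :=
  @MeasurableSpace.CountablyGenerated.mk K (pastFiltration L hmeas β)
    ⟨_, hβ.biUnion fun x _ => countable_range (L x), rfl⟩

end PastFiltration

section Transport

variable {X Y : Type*} {f : X → Y}

lemma IsCCCFamily.image {𝓐 : Set (Set X)} (h𝓐 : IsCCCFamily 𝓐) (hf : f.Injective) :
    IsCCCFamily ((f '' ·) '' 𝓐) := by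
  intro 𝓓 h𝓓 hunc hdisj
  have himage : (f '' ·) '' (𝓐 ∩ (f '' ·) ⁻¹' 𝓓) = 𝓓 := by
    rw [image_inter_preimage, inter_eq_right.2 h𝓓]
  obtain ⟨a, ha, b, hb, hne, hab⟩ := h𝓐 (𝓐 ∩ (f '' ·) ⁻¹' 𝓓) inter_subset_left
    (fun h => hunc (himage ▸ h.image _))
    (fun a ha b hb hne => (disjoint_image_iff hf).1 (hdisj ha.2 hb.2 (hf.image_injective.ne hne)))
  exact ⟨f '' a, ha.2, f '' b, hb.2, hf.image_injective.ne hne, a ∪ b, hab, image_union f a b⟩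

lemma MuIndependent.image {K : Type*} [MeasurableSpace K] {μ : Measure K} {L : Y → Bool → Set K}
    {a : Set X} (h : MuIndependent μ (L ∘ f) a) : MuIndependent μ L (f '' a) := by
  intro φ
  rw [biInter_image]
  exact h (φ ∘ f)

end Transport

section OmegaOne

lemma uncountable_toType_ord_aleph_one : Uncountable (Cardinal.aleph 1).ord.ToType := by
  rw [← Cardinal.aleph0_lt_mk_iff, Cardinal.mk_ord_toType]
  exact Cardinal.aleph0_lt_aleph_one

lemma countable_Iio_toType_ord_aleph_one (x : (Cardinal.aleph 1).ord.ToType) :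
    (Iio x).Countable := by
  rw [← Cardinal.le_aleph0_iff_set_countable, ← Cardinal.lt_aleph_one_iff]
  exact (Cardinal.mk_Iio_lt x (by simp)).trans_eq (Cardinal.mk_ord_toType _)

lemma nonempty_toType_ord_aleph_one_embedding.{u} (ι : Type u) [Uncountable ι] :
    Nonempty ((Cardinal.aleph.{u} 1).ord.ToType ↪ ι) := by
  rw [← Cardinal.le_def, Cardinal.mk_ord_toType, Cardinal.aleph_one_le_iff]
  exact Cardinal.aleph0_lt_mk_iff.2 inferInstance

end OmegaOne

theorem exists_ccc_family_of_independent_sets_of_countable_Iio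
    {K : Type*} [MeasurableSpace K] {μ : Measure K} [IsFiniteMeasure μ]
    {ι : Type*} [LinearOrder ι] [WellFoundedLT ι] [Uncountable ι] (hc : ∀ x : ι, (Iio x).Countable)
    {L : ι → Bool → Set K} (hmeas : ∀ ξ i, MeasurableSet (L ξ i)) {ε : ℝ≥0∞} (hε : ε ≠ 0)
    (h2 : ∀ ξ η, ξ ≠ η → ε ≤ μ (L ξ false ∩ L η true)) :
    ∃ 𝓐₀ : Set (Set ι),
      (∀ a ∈ 𝓐₀, a.Finite ∧ MuIndependent μ L a) ∧ (∀ a ∈ 𝓐₀, ∀ b ⊆ a, b ∈ 𝓐₀) ∧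
        IsCCCFamily 𝓐₀ ∧ ¬(⋃₀ 𝓐₀).Countable := by
  have hL : ∀ ⦃α β⦄, α < β → ∀ i, MeasurableSet[pastFiltration L hmeas β] (L α i) :=
    fun α β => measurableSet_pastFiltration
  have hpress : HasPressingDown (pastFiltration L hmeas) μ := hasPressingDown_of_le_iSup hc
    (fun β => countablyGenerated_pastFiltration (hc β)) (fun u b _ => pastFiltration_le_iSup)
  exact ⟨envelopeFamily (pastFiltration L hmeas) μ L,
    fun a ha => ⟨finite_of_mem_envelopeFamily ha, muIndependent_of_mem_envelopeFamily hL ha⟩,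
    fun a ha b => mem_envelopeFamily_of_subset hL ha, isCCCFamily_envelopeFamily hc hL hpress,
    not_countable_sUnion_envelopeFamily hpress hε h2⟩

theorem exists_ccc_family_of_independent_sets_general
    {K : Type*} [MeasurableSpace K] (μ : Measure K) [IsFiniteMeasure μ]
    {ι : Type*} [Uncountable ι]
    (L : ι → Bool → Set K) (hmeas : ∀ ξ i, MeasurableSet (L ξ i))
    (ε : ℝ) (hε : 0 < ε)
    (h2 : ∀ ξ η, ξ ≠ η → ε ≤ (μ (L ξ false ∩ L η true)).toReal) :
    ∃ T : Set ι, ¬T.Countable ∧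
      ∃ 𝓐₀ : Set (Set ι),
        (∀ a ∈ 𝓐₀, a.Finite ∧ a ⊆ T ∧ MuIndependent μ L a) ∧
        (∀ a ∈ 𝓐₀, ∀ b ⊆ a, b ∈ 𝓐₀) ∧
        IsCCCFamily 𝓐₀ ∧ ⋃₀ 𝓐₀ = T := by
  obtain ⟨f, hf⟩ := nonempty_toType_ord_aleph_one_embedding ι
  have := uncountable_toType_ord_aleph_one
  have h2' : ∀ ξ η, ξ ≠ η → ENNReal.ofReal ε ≤ μ ((L ∘ f) ξ false ∩ (L ∘ f) η true) :=
    fun ξ η hne => (ENNReal.ofReal_le_iff_le_toReal (measure_ne_top _ _)).2 (h2 _ _ (hf.ne hne))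
  obtain ⟨𝓐, hindep, hher, hccc, hunion⟩ :=
    exists_ccc_family_of_independent_sets_of_countable_Iio countable_Iio_toType_ord_aleph_one
      (fun ξ => hmeas (f ξ)) (ENNReal.ofReal_pos.2 hε).ne' h2'
  refine ⟨⋃₀ ((f '' ·) '' 𝓐), ?_, (f '' ·) '' 𝓐, ?_, ?_, hccc.image hf, rfl⟩
  · rw [← image_sUnion]
    exact fun h => hunion (countable_of_injective_of_countable_image hf.injOn h)
  · rintro _ ⟨a, ha, rfl⟩
    exact ⟨(hindep a ha).1.image f, subset_sUnion_of_mem (mem_image_of_mem _ ha),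
      (hindep a ha).2.image⟩
  · rintro _ ⟨a, ha, rfl⟩ b hb
    obtain ⟨b, hba, rfl⟩ := subset_image_iff.1 hb
    exact mem_image_of_mem _ (hher a ha b hba)

theorem exists_ccc_family_of_independent_sets
    {K : Type*} [MeasurableSpace K] (μ : Measure K) [IsProbabilityMeasure μ]
    {ι : Type*} (hι : Cardinal.mk ι = Cardinal.aleph 1)
    (L : ι → Bool → Set K) (hmeas : ∀ ξ i, MeasurableSet (L ξ i))
    (hdisj : ∀ ξ, Disjoint (L ξ false) (L ξ true))
    (ε : ℝ) (hε : 0 < ε)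
    (h1 : ∀ ξ, 1 - ε / 2 < (μ (L ξ false)).toReal + (μ (L ξ true)).toReal)
    (h2 : ∀ ξ η, ξ ≠ η → ε ≤ (μ (L ξ false ∩ L η true)).toReal) :
    ∃ T : Set ι, ¬T.Countable ∧
      ∃ 𝓐₀ : Set (Set ι),
        (∀ a ∈ 𝓐₀, a.Finite ∧ a ⊆ T ∧ MuIndependent μ L a) ∧
        (∀ a ∈ 𝓐₀, ∀ b ⊆ a, b ∈ 𝓐₀) ∧
        IsCCCFamily 𝓐₀ ∧ ⋃₀ 𝓐₀ = T := by
  have : Uncountable ι := by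
    rw [← Cardinal.aleph0_lt_mk_iff, hι]
    exact Cardinal.aleph0_lt_aleph_one
  exact exists_ccc_family_of_independent_sets_general μ L hmeas ε hε h2
end

section
/- Let T be an uncountable separable metrizable space and μ a probability measure on a measurable space K. Suppose {(L^0_t, L^1_t) : t ∈ T} is a family of pairs of disjoint measurable subsets of K such that for some constant ε > 0: (i) μ(L^0_t) + μ(L^1_t) > 1 − ε/2 for every t ∈ T, and (ii) μ(L^0_t ∩ L^1_s) > ε whenever t, s ∈ T with t ≠ s. Then there is a nonempty dense-in-itself set S ⊆ T such that the family {(L^0_t, L^1_t) : t ∈ S} is independent. -/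
open MeasureTheory Set

/-!
For countable `A ⊆ T` let `Σ_A` be the σ-algebra generated by the sets `L t i` with `t ∈ A`.
If two indices had their pairs separated, up to `ε / 2`, by the same set `C`, then
`μ (L t false ∩ L s true) < ε` would follow; so the countable algebra generating `Σ_A` separates
only countably many pairs. An index `t A ∉ A` whose pair is not separated splits some `B A ∈ Σ_A` of
positive measure: both `L (t A) i` meet every part of `B A` in `Σ_A` of positive measure.

The point `t A` and the set `B A` are determined, up to arbitrarily small errors, by countably many
data taken from `A`. By a pressing-down argument there is a nonempty family `𝒢` of countable sets
such that for `A ∈ 𝒢` some `A' ∈ 𝒢` above any prescribed countable set has `t A'` close to `t A`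
and `B A'` close to `B A`. When `A'` contains all the indices used so far, adding the pair
`L (t A') i ∩ B A'` preserves independence, so `ω` such extensions produce an independent family
in which every index `t A` is accumulated.
-/

open scoped symmDiff ENNReal Topology

section PressingDown

universe u

theorem exists_rank_of_lfp_eq_univ {X : Type u} (Φ : Set X →o Set X) (h : Φ.lfp = univ) :
    ∃ r : X → Ordinal.{u}, ∀ x, x ∈ Φ {y | r y < r x} := by
  have exists_stage (x : X) : ∃ a, x ∈ Φ (OrdinalApprox.lfpApprox Φ ∅ a) := by
    obtain ⟨a, ha⟩ := OrdinalApprox.lfp_mem_range_lfpApprox Φ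
    have ha : OrdinalApprox.lfpApprox Φ ∅ a = Φ.lfp := ha
    exact ⟨a, by rw [ha, Φ.map_lfp, h]; exact mem_univ x⟩
  refine ⟨fun x => sInf {a | x ∈ Φ (OrdinalApprox.lfpApprox Φ ∅ a)},
    fun x => Φ.mono (fun y hy => ?_) (csInf_mem (exists_stage x))⟩
  rw [OrdinalApprox.lfpApprox] at hy
  simp only [sup_eq_union, empty_union, iSup_eq_iUnion, mem_iUnion] at hy
  obtain ⟨a, ha, hya⟩ := hy
  exact (csInf_le' (s := {a | y ∈ Φ (OrdinalApprox.lfpApprox Φ ∅ a)}) hya).trans_lt ha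

variable {T : Type u} {ι : Type*} {D : Set T → Set ι}

theorem exists_countable_forall_subset
    (hcount : ∀ A, A.Countable → (D A).Countable)
    (hunion : ∀ A : ℕ → Set T, Monotone A → D (⋃ n, A n) ⊆ ⋃ n, D (A n))
    {h : ι → Set T} (hh : ∀ c, (h c).Countable) :
    ∃ A : Set T, A.Countable ∧ ∀ c ∈ D A, h c ⊆ A := by
  let A : ℕ → Set T := fun n => (fun A => A ∪ ⋃ c ∈ D A, h c)^[n] ∅
  have A_succ (n : ℕ) : A (n + 1) = A n ∪ ⋃ c ∈ D (A n), h c := Function.iterate_succ_apply' ..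
  have A_countable (n : ℕ) : (A n).Countable := by
    induction n with
    | zero => exact countable_empty
    | succ n ih => exact A_succ n ▸ ih.union ((hcount _ ih).biUnion fun c _ => hh c)
  have A_mono : Monotone A := monotone_nat_of_le_succ fun n => A_succ n ▸ subset_union_left
  refine ⟨⋃ n, A n, countable_iUnion A_countable, fun c hc => ?_⟩
  obtain ⟨n, hn⟩ := mem_iUnion.1 (hunion A A_mono hc)
  calc h c ⊆ ⋃ c ∈ D (A n), h c := subset_biUnion_of_mem (u := h) hn
    _ ⊆ A (n + 1) := A_succ n ▸ subset_union_right
    _ ⊆ ⋃ n, A n := subset_iUnion A (n + 1)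

theorem exists_cofinal_fiber_of_forall_exists_mem
    (hcount : ∀ A, A.Countable → (D A).Countable)
    (hunion : ∀ A : ℕ → Set T, Monotone A → D (⋃ n, A n) ⊆ ⋃ n, D (A n))
    {R : Set T → ι → Prop} (hR : ∀ A, A.Countable → ∃ c ∈ D A, R A c) :
    ∃ c, ∀ A₀ : Set T, A₀.Countable → ∃ A, A.Countable ∧ A₀ ⊆ A ∧ R A c := by
  by_contra! hbounded
  choose bound bound_countable hbound using hbounded
  obtain ⟨A, hA, bound_subset⟩ := exists_countable_forall_subset hcount hunion bound_countable
  obtain ⟨c, hc, hAc⟩ := hR A hA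
  exact hbound c A hA (bound_subset c hc) hAc

theorem exists_nonempty_self_accumulating
    (hcount : ∀ A, A.Countable → (D A).Countable)
    (hunion : ∀ A : ℕ → Set T, Monotone A → D (⋃ n, A n) ⊆ ⋃ n, D (A n))
    (W : ι → Set (Set T)) :
    ∃ 𝒢 : Set (Set T), 𝒢.Nonempty ∧ ∀ A ∈ 𝒢, A.Countable ∧ ∀ c ∈ D A, A ∈ W c →
      ∀ A₀ : Set T, A₀.Countable → ∃ A' ∈ 𝒢, A₀ ⊆ A' ∧ A' ∈ W c := by
  -- `Φ` discards `A` if it lies in some `W c`, `c ∈ D A`, whose members above a countable set have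
  -- all been discarded; discarding everything would give an infinite descent of ranks.
  let Φ : Set (Set T) →o Set (Set T) :=
    { toFun := fun ℬ => {A | A.Countable → ∃ c ∈ D A, A ∈ W c ∧
        ∃ A₀ : Set T, A₀.Countable ∧ ∀ A', A₀ ⊆ A' → A' ∈ W c → A' ∈ ℬ}
      monotone' := fun _ _ hsub A hA hAc =>
        let ⟨c, hc, hW, A₀, hA₀, hℬ⟩ := hA hAc
        ⟨c, hc, hW, A₀, hA₀, fun A' hA' hW' => hsub (hℬ A' hA' hW')⟩ }
  refine ⟨Φ.lfpᶜ, nonempty_compl.2 fun hlfp => ?_, fun A hA => ?_⟩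
  · obtain ⟨r, hr⟩ := exists_rank_of_lfp_eq_univ Φ hlfp
    let R (A : Set T) (c : ι) : Prop := A ∈ W c ∧
      ∃ A₀ : Set T, A₀.Countable ∧ ∀ A', A₀ ⊆ A' → A' ∈ W c → r A' < r A
    obtain ⟨c, hc⟩ := exists_cofinal_fiber_of_forall_exists_mem (R := R) hcount hunion hr
    have fiber_nonempty : {A | R A c}.Nonempty := (hc ∅ countable_empty).imp fun _ h => h.2.2
    obtain ⟨A, ⟨-, A₀, hA₀, hlt⟩, A_min⟩ :=
      WellFounded.has_min (InvImage.wf r wellFounded_lt) _ fiber_nonempty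
    obtain ⟨A', -, hsub, hA'⟩ := hc A₀ hA₀
    exact A_min A' hA' (hlt A' hsub hA'.1)
  · rw [← Φ.map_lfp] at hA
    obtain ⟨hAc, hA⟩ := Classical.not_imp.1 hA
    refine ⟨hAc, fun c hc hW A₀ hA₀ => ?_⟩
    by_contra! hnot
    exact hA ⟨c, hc, hW, A₀, hA₀, fun A' hsub hW' => not_not.1 fun h => hnot A' h hsub hW'⟩

end PressingDown

section GeneratedAlgebra

variable {T K : Type*}

theorem isSetAlgebra_iUnion_of_monotone {𝒜 : ℕ → Set (Set K)} (hmono : Monotone 𝒜)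
    (h𝒜 : ∀ n, IsSetAlgebra (𝒜 n)) : IsSetAlgebra (⋃ n, 𝒜 n) where
  empty_mem := mem_iUnion.2 ⟨0, (h𝒜 0).empty_mem⟩
  compl_mem s hs := by
    obtain ⟨n, hn⟩ := mem_iUnion.1 hs
    exact mem_iUnion.2 ⟨n, (h𝒜 n).compl_mem hn⟩
  union_mem s s' hs hs' := by
    obtain ⟨n, hn⟩ := mem_iUnion.1 hs
    obtain ⟨k, hk⟩ := mem_iUnion.1 hs'
    exact mem_iUnion.2 ⟨max n k, (h𝒜 _).union_mem
      (hmono (le_max_left n k) hn) (hmono (le_max_right n k) hk)⟩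

theorem generateSetAlgebra_iUnion_subset {𝒜 : ℕ → Set (Set K)} (hmono : Monotone 𝒜) :
    generateSetAlgebra (⋃ n, 𝒜 n) ⊆ ⋃ n, generateSetAlgebra (𝒜 n) :=
  IsSetAlgebra.generateSetAlgebra_subset
    (iUnion_mono fun _ => self_subset_generateSetAlgebra)
    (isSetAlgebra_iUnion_of_monotone (fun _ _ hnk => generateSetAlgebra_mono (hmono hnk))
      fun _ => isSetAlgebra_generateSetAlgebra)

theorem exists_mem_generateSetAlgebra_measure_symmDiff_lt {m0 : MeasurableSpace K}
    (μ : Measure K) [IsFiniteMeasure μ] {𝒜 : Set (Set K)} (h𝒜 : ∀ s ∈ 𝒜, MeasurableSet s)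
    {B : Set K} (hB : MeasurableSet[MeasurableSpace.generateFrom 𝒜] B) {δ : ℝ≥0∞} (hδ : δ ≠ 0) :
    ∃ C ∈ generateSetAlgebra 𝒜, μ (B ∆ C) < δ := by
  have hle : MeasurableSpace.generateFrom 𝒜 ≤ m0 := MeasurableSpace.generateFrom_le h𝒜
  have halg : IsSetAlgebra (generateSetAlgebra 𝒜) := isSetAlgebra_generateSetAlgebra
  obtain ⟨C, hC, hlt⟩ := exists_measure_symmDiff_lt_of_generateFrom_isSetRing
    (mα := MeasurableSpace.generateFrom 𝒜) (μ := μ.trim hle) halg.isSetRing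
    ⟨{univ}, countable_singleton _, singleton_subset_iff.2 halg.univ_mem, by simp⟩
    generateFrom_generateSetAlgebra_eq.symm hB (pos_iff_ne_zero.2 hδ)
  exact ⟨C, hC, symmDiff_comm C B ▸ (le_trim hle).trans_lt hlt⟩

/-- The sets `L t i` with index `t ∈ A`. The σ-algebra they generate is the information about the
family `L` available from the index set `A`. -/
def pieces (L : T → Bool → Set K) (A : Set T) : Set (Set K) :=
  ⋃ t ∈ A, range (L t)

variable {L : T → Bool → Set K}

theorem mem_pieces {A : Set T} {t : T} (ht : t ∈ A) (i : Bool) : L t i ∈ pieces L A :=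
  mem_biUnion ht (mem_range_self i)

theorem pieces_mono : Monotone (pieces L) :=
  fun _ _ hsub => biUnion_mono hsub fun _ _ => Subset.rfl

theorem pieces_iUnion (A : ℕ → Set T) : pieces L (⋃ n, A n) = ⋃ n, pieces L (A n) :=
  biUnion_iUnion ..

theorem countable_pieces {A : Set T} (hA : A.Countable) : (pieces L A).Countable :=
  hA.biUnion fun _ _ => countable_range _

theorem measurableSet_of_mem_pieces [MeasurableSpace K] (hmeas : ∀ t i, MeasurableSet (L t i))
    {A : Set T} {s : Set K} (hs : s ∈ pieces L A) : MeasurableSet s := by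
  obtain ⟨t, -, i, rfl⟩ := mem_iUnion₂.1 hs
  exact hmeas t i

end GeneratedAlgebra

section Splitting

variable {T K : Type*} {m0 : MeasurableSpace K} {μ : Measure K}

/-- The pair `(E false, E true)` splits every part of `B` of positive measure belonging to the
σ-algebra `m`: both members of the pair meet that part in positive measure. -/
def SplitBy (μ : Measure K) (m : MeasurableSpace K) (B : Set K) (E : Bool → Set K) : Prop :=
  ∀ C, MeasurableSet[m] C → μ (C ∩ B) ≠ 0 → ∀ i, μ (C ∩ B ∩ E i) ≠ 0

theorem SplitBy.inter {m : MeasurableSpace K} {B : Set K} {E : Bool → Set K}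
    (h : SplitBy μ m B E) : SplitBy μ m B fun i => E i ∩ B := by
  intro C hC hCB i
  have inter_eq : C ∩ B ∩ (E i ∩ B) = C ∩ B ∩ E i := by
    rw [inter_comm (E i), ← inter_assoc, inter_assoc C, inter_self]
  simpa only [inter_eq] using h C hC hCB i

-- `B` is the support of the conditional expectation of the indicator of `E` given `m`.
theorem exists_measurableSet_forall_inter_null_iff (μ : Measure K) [IsFiniteMeasure μ]
    {m : MeasurableSpace K} (hm : m ≤ m0) (E : Set K) :
    ∃ B, MeasurableSet[m] B ∧ ∀ C, MeasurableSet[m] C → (μ (C ∩ E) = 0 ↔ μ (C ∩ B) = 0) := by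
  let ν := (μ.restrict E).trim hm
  let f := ν.rnDeriv (μ.trim hm)
  have hf : Measurable[m] f := Measure.measurable_rnDeriv ..
  have hac : ν ≪ μ.trim hm := Measure.restrict_le_self.absolutelyContinuous.trim hm
  have hB : MeasurableSet[m] {x | f x ≠ 0} := (hf (measurableSet_singleton 0)).compl
  refine ⟨{x | f x ≠ 0}, hB, fun C hC => ?_⟩
  calc μ (C ∩ E) = 0 ↔ ν C = 0 := by
        rw [trim_measurableSet_eq hm hC, Measure.restrict_apply (hm _ hC)]
    _ ↔ μ.trim hm ({x | f x ≠ 0} ∩ C) = 0 := by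
        rw [← withDensity_apply_eq_zero hf, Measure.withDensity_rnDeriv_eq _ _ hac]
    _ ↔ μ (C ∩ {x | f x ≠ 0}) = 0 := by
        rw [trim_measurableSet_eq hm (hB.inter hC), inter_comm]

theorem exists_splitBy_or_exists_separating (μ : Measure K) [IsFiniteMeasure μ]
    {𝒜 : Set (Set K)} (h𝒜 : ∀ s ∈ 𝒜, MeasurableSet s) (E : Bool → Set K)
    {δ : ℝ≥0∞} (hδ : δ ≠ 0) :
    (∃ B, MeasurableSet[MeasurableSpace.generateFrom 𝒜] B ∧ μ B ≠ 0 ∧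
      SplitBy μ (MeasurableSpace.generateFrom 𝒜) B E) ∨
    ∃ C ∈ generateSetAlgebra 𝒜, μ (E false \ C) < δ ∧ μ (E true ∩ C) < δ := by
  have hle : MeasurableSpace.generateFrom 𝒜 ≤ m0 := MeasurableSpace.generateFrom_le h𝒜
  choose hull hull_meas hull_null using fun i =>
    exists_measurableSet_forall_inter_null_iff μ hle (E i)
  by_cases hnull : μ (hull false ∩ hull true) = 0
  · have false_sdiff_null : μ (E false \ hull false) = 0 := by
      rw [sdiff_eq_compl_inter, hull_null _ _ (hull_meas false).compl, compl_inter_self,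
        measure_empty]
    have true_inter_null : μ (hull false ∩ E true) = 0 :=
      (hull_null true _ (hull_meas false)).2 hnull
    have measure_lt {s N C : Set K} (hN : μ N = 0) (hC : μ (hull false ∆ C) < δ)
        (hs : s ⊆ N ∪ hull false ∆ C) : μ s < δ :=
      ((measure_mono hs).trans (measure_union_le _ _)).trans_lt (by rwa [hN, zero_add])
    obtain ⟨C, hC, hlt⟩ :=
      exists_mem_generateSetAlgebra_measure_symmDiff_lt μ h𝒜 (hull_meas false) hδ
    refine .inr ⟨C, hC, measure_lt false_sdiff_null hlt fun x hx => ?_,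
      measure_lt true_inter_null hlt fun x hx => ?_⟩ <;>
    by_cases hxB : x ∈ hull false <;> simp_all [mem_symmDiff]
  · refine .inl ⟨hull false ∩ hull true, (hull_meas _).inter (hull_meas _), hnull,
      fun C hC hCB i hCE => hCB ?_⟩
    have subset_hull : C ∩ (hull false ∩ hull true) ⊆ hull i := by
      cases i
      exacts [fun _ h => h.2.1, fun _ h => h.2.2]
    rwa [hull_null i _ (hC.inter ((hull_meas _).inter (hull_meas _))),
      inter_eq_self_of_subset_left subset_hull] at hCE

theorem subsingleton_setOf_separating {L : T → Bool → Set K} {ε : ℝ≥0∞}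
    (h : Pairwise fun t s => ε ≤ μ (L t false ∩ L s true)) (C : Set K) :
    {t | μ (L t false \ C) < ε / 2 ∧ μ (L t true ∩ C) < ε / 2}.Subsingleton := by
  intro t ht s hs
  by_contra hne
  refine (h hne).not_gt ?_
  calc μ (L t false ∩ L s true) ≤ μ ((L t false \ C) ∪ (L s true ∩ C)) := by
        refine measure_mono fun x hx => ?_
        by_cases hxC : x ∈ C
        exacts [.inr ⟨hx.2, hxC⟩, .inl ⟨hx.1, hxC⟩]
    _ ≤ μ (L t false \ C) + μ (L s true ∩ C) := measure_union_le _ _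
    _ < ε / 2 + ε / 2 := ENNReal.add_lt_add ht.1 hs.2
    _ = ε := ENNReal.add_halves ε

/-- The index `t` is new relative to `A`, and its pair of sets splits the set `B`, which has
positive measure and belongs to the σ-algebra generated by the pieces over `A`. Such data are found
over every countable `A` and drive the construction of an independent family. -/
structure SplitsOver (μ : Measure K) (L : T → Bool → Set K) (A : Set T) (t : T) (B : Set K) :
    Prop where
  notMem : t ∉ A
  measurableSet : MeasurableSet[MeasurableSpace.generateFrom (pieces L A)] B
  measure_ne_zero : μ B ≠ 0
  splitBy : SplitBy μ (MeasurableSpace.generateFrom (pieces L A)) B (L t)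

theorem exists_splitsOver [Uncountable T] [IsFiniteMeasure μ] {L : T → Bool → Set K}
    (hmeas : ∀ t i, MeasurableSet (L t i)) {ε : ℝ≥0∞} (hε : ε ≠ 0)
    (h : Pairwise fun t s => ε ≤ μ (L t false ∩ L s true)) {A : Set T} (hA : A.Countable) :
    ∃ t B, SplitsOver μ L A t B := by
  let separated : Set T := ⋃ C ∈ generateSetAlgebra (pieces L A),
    {t | μ (L t false \ C) < ε / 2 ∧ μ (L t true ∩ C) < ε / 2}
  have separated_countable : separated.Countable :=
    (countable_generateSetAlgebra (countable_pieces hA)).biUnion fun C _ =>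
      (subsingleton_setOf_separating h C).countable
  obtain ⟨t, ht⟩ : ∃ t, t ∉ A ∪ separated :=
    (ne_univ_iff_exists_notMem _).1 fun huniv =>
      not_countable_univ (huniv ▸ hA.union separated_countable)
  obtain ⟨htA, hts⟩ := not_or.1 ht
  obtain ⟨B, hB, hB0, hsplit⟩ | ⟨C, hC, hsep⟩ :=
    exists_splitBy_or_exists_separating μ (fun _ => measurableSet_of_mem_pieces hmeas) (L t)
      (ENNReal.half_pos hε).ne'
  · exact ⟨t, B, htA, hB, hB0, hsplit⟩
  · exact (hts (mem_biUnion hC hsep)).elim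

end Splitting

section Accumulation

universe u

variable {T : Type u} {X K : Type*} [TopologicalSpace X] [SecondCountableTopology X]

theorem exists_nonempty_accumulating {m0 : MeasurableSpace K} (μ : Measure K) [IsFiniteMeasure μ]
    {L : T → Bool → Set K} (hmeas : ∀ t i, MeasurableSet (L t i)) (p : Set T → X)
    {B : Set T → Set K}
    (hB : ∀ A, A.Countable → MeasurableSet[MeasurableSpace.generateFrom (pieces L A)] (B A)) :
    ∃ 𝒢 : Set (Set T), 𝒢.Nonempty ∧ ∀ A ∈ 𝒢, A.Countable ∧
      ∀ U ∈ 𝓝 (p A), ∀ δ : ℝ≥0∞, δ ≠ 0 → ∀ A₀ : Set T, A₀.Countable →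
        ∃ A' ∈ 𝒢, A₀ ⊆ A' ∧ p A' ∈ U ∧ μ (B A ∆ B A') < δ := by
  let D : Set T → Set (Set X × ℕ × Set K) := fun A =>
    TopologicalSpace.countableBasis X ×ˢ univ ×ˢ generateSetAlgebra (pieces L A)
  let W : Set X × ℕ × Set K → Set (Set T) := fun c =>
    {A | p A ∈ c.1 ∧ μ (B A ∆ c.2.2) < (c.2.1 : ℝ≥0∞)⁻¹}
  have D_countable (A : Set T) (hA : A.Countable) : (D A).Countable :=
    (TopologicalSpace.countable_countableBasis X).prod
      (countable_univ.prod (countable_generateSetAlgebra (countable_pieces hA)))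
  have D_iUnion (A : ℕ → Set T) (hA : Monotone A) : D (⋃ n, A n) ⊆ ⋃ n, D (A n) := by
    rintro ⟨V, k, C⟩ ⟨hV, -, hC⟩
    rw [pieces_iUnion] at hC
    obtain ⟨n, hn⟩ := mem_iUnion.1 (generateSetAlgebra_iUnion_subset (pieces_mono.comp hA) hC)
    exact mem_iUnion.2 ⟨n, hV, mem_univ k, hn⟩
  obtain ⟨𝒢, h𝒢, hacc⟩ := exists_nonempty_self_accumulating D_countable D_iUnion W
  refine ⟨𝒢, h𝒢, fun A hA => ⟨(hacc A hA).1, fun U hU δ hδ A₀ hA₀ => ?_⟩⟩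
  obtain ⟨V, hV, hpV, hVU⟩ := (TopologicalSpace.isBasis_countableBasis X).mem_nhds_iff.1 hU
  obtain ⟨k, hk⟩ := ENNReal.exists_inv_nat_lt (ENNReal.half_pos hδ).ne'
  obtain ⟨C, hC, hBC⟩ := exists_mem_generateSetAlgebra_measure_symmDiff_lt μ
    (fun _ => measurableSet_of_mem_pieces hmeas) (hB A (hacc A hA).1)
    (ENNReal.inv_ne_zero.2 (ENNReal.natCast_ne_top k))
  obtain ⟨A', hA', hsub, hpV', hBC'⟩ :=
    (hacc A hA).2 (V, k, C) ⟨hV, mem_univ k, hC⟩ ⟨hpV, hBC⟩ A₀ hA₀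
  refine ⟨A', hA', hsub, hVU hpV', ?_⟩
  calc μ (B A ∆ B A') ≤ μ (B A ∆ C) + μ (C ∆ B A') := measure_symmDiff_le ..
    _ < δ / 2 + δ / 2 := ENNReal.add_lt_add (hBC.trans hk) (symmDiff_comm C _ ▸ hBC'.trans hk)
    _ = δ := ENNReal.add_halves δ

end Accumulation

section MeasureIndependence

variable {T X K : Type*} {m0 : MeasurableSpace K} {μ : Measure K} {E : X → Bool → Set K}
  {S : Set X}

/-- The family of pairs `(E x false, E x true)`, `x ∈ S`, is `μ`-independent: all finite
intersections choosing one set from each pair have positive measure. -/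
def MeasureIndependentOn (μ : Measure K) (E : X → Bool → Set K) (S : Set X) : Prop :=
  ∀ a ⊆ S, a.Finite → ∀ φ : X → Bool, μ (⋂ x ∈ a, E x (φ x)) ≠ 0

namespace MeasureIndependentOn

theorem of_forall_measure_biInter_ne_zero
    (h : ∀ φ : X → Bool, μ (⋂ x ∈ S, E x (φ x)) ≠ 0) : MeasureIndependentOn μ E S :=
  fun _ ha _ φ hnull => h φ (measure_mono_null (biInter_subset_biInter_left ha) hnull)

theorem mono_sets {E' : X → Bool → Set K} (h : MeasureIndependentOn μ E S)
    (hsub : ∀ x i, E x i ⊆ E' x i) : MeasureIndependentOn μ E' S :=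
  fun a ha hfin φ hnull => h a ha hfin φ
    (measure_mono_null (iInter₂_mono fun x _ => hsub x (φ x)) hnull)

theorem image {L : T → Bool → Set K} {t : X → T}
    (h : MeasureIndependentOn μ (fun x => L (t x)) S) : MeasureIndependentOn μ L (t '' S) := by
  intro a ha hfin φ
  obtain ⟨b, hb, hbfin, rfl⟩ := exists_subset_image_finite_and.1 ⟨a, ha, hfin, rfl⟩
  simpa only [biInter_image, Function.comp_apply] using h b hb hbfin (φ ∘ t)

theorem iUnion_of_monotone {F : ℕ → Set X} (hmono : Monotone F)
    (h : ∀ n, MeasureIndependentOn μ E (F n)) : MeasureIndependentOn μ E (⋃ n, F n) := by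
  intro a ha hfin
  obtain ⟨n, hn⟩ := hmono.directed_le.exists_mem_subset_of_finset_subset_biUnion
    (s := hfin.toFinset) (by simpa using ha)
  exact h n a (by simpa using hn) hfin

theorem exists_forall_le_measure_biInter (h : MeasureIndependentOn μ E S) (hS : S.Finite) :
    ∃ δ : ℝ≥0∞, δ ≠ 0 ∧ ∀ φ : X → Bool, δ ≤ μ (⋂ x ∈ S, E x (φ x)) := by
  have : Finite S := hS
  obtain ⟨ψ, hψ⟩ := Finite.exists_min fun ψ : S → Bool => μ (⋂ x : S, E x (ψ x))
  obtain ⟨φ, rfl⟩ := Subtype.val_injective.surjective_comp_right ψ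
  exact ⟨μ (⋂ x ∈ S, E x (φ x)), h S Subset.rfl hS φ,
    fun φ' => by simpa only [biInter_eq_iInter, Function.comp_apply] using hψ fun x => φ' x⟩

theorem insert_of_splitBy {m : MeasurableSpace K} {B : Set K} {y : X} (hS : S.Finite)
    (hE : ∀ x ∈ S, ∀ i, MeasurableSet[m] (E x i))
    (hB : ∀ φ : X → Bool, μ ((⋂ x ∈ S, E x (φ x)) ∩ B) ≠ 0) (hy : SplitBy μ m B (E y)) :
    MeasureIndependentOn μ E (insert y S) := by
  refine of_forall_measure_biInter_ne_zero fun φ hnull => ?_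
  have hmeas : MeasurableSet[m] (⋂ x ∈ S, E x (φ x)) :=
    Finite.measurableSet_biInter hS fun x hx => hE x hx (φ x)
  refine hy _ hmeas (hB φ) (φ y) (measure_mono_null ?_ hnull)
  rw [biInter_insert, inter_comm (E y (φ y))]
  exact inter_subset_inter_left _ inter_subset_left

end MeasureIndependentOn

theorem measure_inter_ne_zero_of_measure_symmDiff_lt {P B B' : Set K} (hP : P ⊆ B)
    (h : μ (B ∆ B') < μ P) : μ (P ∩ B') ≠ 0 := by
  intro hnull
  refine h.not_ge ?_
  calc μ P ≤ μ (P ∩ B') + μ (P \ B') := measure_le_inter_add_sdiff ..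
    _ = μ (P \ B') := by rw [hnull, zero_add]
    _ ≤ μ (B ∆ B') := measure_mono fun _ hx => .inl ⟨hP hx.1, hx.2⟩

end MeasureIndependence

section Fusion

variable {X T : Type*} [TopologicalSpace T]

theorem exists_finite_superset_forall_mem_nhds {P : Set X → Prop} {t : X → T}
    (hP : ∀ F, F.Finite → P F → ∀ x ∈ F, ∀ U ∈ 𝓝 (t x), ∃ y, t y ∈ U ∧ t y ≠ t x ∧ P (insert y F))
    {U : X → Set T} (hU : ∀ x, U x ∈ 𝓝 (t x)) {F : Set X} (hF : F.Finite) (hPF : P F) :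
    ∃ F', F'.Finite ∧ P F' ∧ F ⊆ F' ∧ ∀ x ∈ F, ∃ y ∈ F', t y ∈ U x ∧ t y ≠ t x := by
  suffices ∀ G ⊆ F, G.Finite →
      ∃ F', F'.Finite ∧ P F' ∧ F ⊆ F' ∧ ∀ x ∈ G, ∃ y ∈ F', t y ∈ U x ∧ t y ≠ t x from
    this F Subset.rfl hF
  intro G hGF hG
  induction G, hG using Finite.induction_on with
  | empty => exact ⟨F, hF, hPF, Subset.rfl, fun _ h => h.elim⟩
  | @insert x G _ _ ih =>
    obtain ⟨hxF, hGF⟩ := insert_subset_iff.1 hGF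
    obtain ⟨F', hF', hPF', hFF', hG⟩ := ih hGF
    obtain ⟨y, hyU, hyx, hPy⟩ := hP F' hF' hPF' x (hFF' hxF) (U x) (hU x)
    refine ⟨insert y F', hF'.insert y, hPy, hFF'.trans (subset_insert y F'),
      forall_mem_insert.2 ⟨⟨y, mem_insert y F', hyU, hyx⟩, fun z hz => ?_⟩⟩
    exact (hG z hz).imp fun w hw => ⟨mem_insert_of_mem y hw.1, hw.2⟩

theorem exists_seq_denseInItself_image_iUnion [FirstCountableTopology T] {P : Set X → Prop}
    {t : X → T}
    (hP : ∀ F, F.Finite → P F → ∀ x ∈ F, ∀ U ∈ 𝓝 (t x), ∃ y, t y ∈ U ∧ t y ≠ t x ∧ P (insert y F))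
    {F₀ : Set X} (hF₀ : F₀.Finite) (hPF₀ : P F₀) :
    ∃ F : ℕ → Set X, Monotone F ∧ F 0 = F₀ ∧ (∀ n, P (F n)) ∧
      DenseInItself (t '' ⋃ n, F n) := by
  choose N hN using fun x => (𝓝 (t x)).exists_antitone_basis
  have hnext (n : ℕ) (F : {F : Set X // F.Finite ∧ P F}) :
      ∃ F' : {F : Set X // F.Finite ∧ P F}, F.1 ⊆ F'.1 ∧
        ∀ x ∈ F.1, ∃ y ∈ F'.1, t y ∈ N x n ∧ t y ≠ t x := by
    obtain ⟨F', hF', hPF', hsub, h⟩ :=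
      exists_finite_superset_forall_mem_nhds hP (fun x => (hN x).mem n) F.2.1 F.2.2
    exact ⟨⟨F', hF', hPF'⟩, hsub, h⟩
  choose next subset_next near_next using hnext
  let F : ℕ → {F : Set X // F.Finite ∧ P F} := fun n => Nat.rec ⟨F₀, hF₀, hPF₀⟩ next n
  have F_mono : Monotone fun n => (F n).1 := monotone_nat_of_le_succ fun n => subset_next n (F n)
  refine ⟨fun n => (F n).1, F_mono, rfl, fun n => (F n).2.2, ?_⟩
  rintro _ ⟨x, hx, rfl⟩
  obtain ⟨n, hxn⟩ := mem_iUnion.1 hx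
  refine mem_closure_iff_nhds.2 fun U hU => ?_
  obtain ⟨k, hk⟩ := (hN x).mem_iff.1 hU
  obtain ⟨y, hy, hyN, hyx⟩ := near_next (max n k) (F _) x (F_mono (le_max_left n k) hxn)
  exact ⟨t y, hk ((hN x).antitone (le_max_right n k) hyN),
    mem_image_of_mem t (mem_iUnion.2 ⟨max n k + 1, hy⟩), hyx⟩

end Fusion

section Construction

variable {T K : Type*} {m0 : MeasurableSpace K} {μ : Measure K} {L : T → Bool → Set K}
  {t : Set T → T} {B : Set T → Set K}

/-- The pair of sets indexed by `t A`, cut down to `B A` so that every finite intersection of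
members of such pairs involving the index `A` is contained in `B A`. -/
def cutPair (L : T → Bool → Set K) (t : Set T → T) (B : Set T → Set K) (A : Set T) (i : Bool) :
    Set K :=
  L (t A) i ∩ B A

theorem measurableSet_cutPair {A A' : Set T} (h : SplitsOver μ L A (t A) (B A))
    (hsub : insert (t A) A ⊆ A') (i : Bool) :
    MeasurableSet[MeasurableSpace.generateFrom (pieces L A')] (cutPair L t B A i) := by
  obtain ⟨ht, hA⟩ := insert_subset_iff.1 hsub
  exact MeasurableSet.inter (MeasurableSpace.measurableSet_generateFrom (mem_pieces ht i))
    (MeasurableSpace.generateFrom_mono (pieces_mono hA) _ h.measurableSet)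

theorem measureIndependentOn_cutPair_singleton {A : Set T} (h : SplitsOver μ L A (t A) (B A)) :
    MeasureIndependentOn μ (cutPair L t B) {A} := by
  rw [← insert_empty_eq]
  exact .insert_of_splitBy finite_empty (fun _ h => h.elim)
    (fun φ => by simpa using h.measure_ne_zero) h.splitBy.inter

theorem exists_insert_measureIndependentOn_cutPair [TopologicalSpace T] {𝒢 : Set (Set T)}
    (hcount : ∀ A ∈ 𝒢, A.Countable) (hsplit : ∀ A ∈ 𝒢, SplitsOver μ L A (t A) (B A))
    {F : Set (Set T)} (hF : F.Finite) (hF𝒢 : F ⊆ 𝒢)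
    (hind : MeasureIndependentOn μ (cutPair L t B) F) {A : Set T} (hA : A ∈ F) {U : Set T}
    (hacc : ∀ δ : ℝ≥0∞, δ ≠ 0 → ∀ A₀ : Set T, A₀.Countable →
        ∃ A' ∈ 𝒢, A₀ ⊆ A' ∧ t A' ∈ U ∧ μ (B A ∆ B A') < δ) :
    ∃ A' ∈ 𝒢, t A' ∈ U ∧ t A' ≠ t A ∧ MeasureIndependentOn μ (cutPair L t B) (insert A' F) := by
  obtain ⟨δ, hδ, hle⟩ := hind.exists_forall_le_measure_biInter hF
  obtain ⟨A', hA', hsub, htU, hlt⟩ := hacc δ hδ (⋃ A ∈ F, insert (t A) A)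
    (hF.countable.biUnion fun A hA => (hcount A (hF𝒢 hA)).insert (t A))
  have insert_subset_of_mem {C : Set T} (hC : C ∈ F) : insert (t C) C ⊆ A' :=
    (subset_biUnion_of_mem (u := fun C => insert (t C) C) hC).trans hsub
  have ne : t A' ≠ t A := fun heq =>
    (hsplit A' hA').notMem (heq ▸ insert_subset_of_mem hA (mem_insert ..))
  refine ⟨A', hA', htU, ne, .insert_of_splitBy hF
    (fun C hC => measurableSet_cutPair (hsplit C (hF𝒢 hC)) (insert_subset_of_mem hC))
    (fun φ => ?_) (hsplit A' hA').splitBy.inter⟩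
  exact measure_inter_ne_zero_of_measure_symmDiff_lt
    ((biInter_subset_of_mem hA).trans inter_subset_right) (hlt.trans_le (hle φ))

theorem exists_denseInItself_independent_general [TopologicalSpace T] [SecondCountableTopology T]
    [Uncountable T] [IsFiniteMeasure μ] (hmeas : ∀ t i, MeasurableSet (L t i))
    {ε : ℝ≥0∞} (hε : ε ≠ 0) (h : Pairwise fun t s => ε ≤ μ (L t false ∩ L s true)) :
    ∃ S : Set T, S.Nonempty ∧ DenseInItself S ∧ MeasureIndependentOn μ L S := by
  choose! t B hsplit using fun (A : Set T) (hA : A.Countable) => exists_splitsOver hmeas hε h hA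
  obtain ⟨𝒢, ⟨A₀, hA₀⟩, h𝒢⟩ :=
    exists_nonempty_accumulating μ hmeas t fun A hA => (hsplit A hA).measurableSet
  have hsplit𝒢 (A : Set T) (hA : A ∈ 𝒢) := hsplit A (h𝒢 A hA).1
  let P (F : Set (Set T)) : Prop := F ⊆ 𝒢 ∧ MeasureIndependentOn μ (cutPair L t B) F
  have extend (F : Set (Set T)) (hF : F.Finite) (hPF : P F) (A : Set T) (hA : A ∈ F) (U : Set T)
      (hU : U ∈ 𝓝 (t A)) : ∃ A', t A' ∈ U ∧ t A' ≠ t A ∧ P (insert A' F) := by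
    obtain ⟨A', hA', htU, hne, hind⟩ := exists_insert_measureIndependentOn_cutPair
      (fun A hA => (h𝒢 A hA).1) hsplit𝒢 hF hPF.1 hPF.2 hA ((h𝒢 A (hPF.1 hA)).2 U hU)
    exact ⟨A', htU, hne, insert_subset hA' hPF.1, hind⟩
  obtain ⟨F, F_mono, hF₀, hPF, hdense⟩ := exists_seq_denseInItself_image_iUnion extend
    (finite_singleton A₀)
    ⟨singleton_subset_iff.2 hA₀, measureIndependentOn_cutPair_singleton (hsplit𝒢 A₀ hA₀)⟩
  have hind : MeasureIndependentOn μ (cutPair L t B) (⋃ n, F n) :=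
    .iUnion_of_monotone F_mono fun n => (hPF n).2
  exact ⟨t '' ⋃ n, F n, ⟨t A₀, mem_image_of_mem t (mem_iUnion.2 ⟨0, hF₀ ▸ rfl⟩)⟩, hdense,
    (hind.mono_sets fun _ _ => inter_subset_left).image⟩

end Construction

theorem exists_denseInItself_independent
    {T : Type*} [TopologicalSpace T] [TopologicalSpace.SeparableSpace T]
    [TopologicalSpace.MetrizableSpace T] [Uncountable T]
    {K : Type*} [MeasurableSpace K] (μ : Measure K) [IsProbabilityMeasure μ]
    (L : T → Bool → Set K) (hmeas : ∀ t i, MeasurableSet (L t i))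
    (hdisj : ∀ t, Disjoint (L t false) (L t true))
    (ε : ℝ) (hε : 0 < ε)
    (h1 : ∀ t, 1 - ε / 2 < (μ (L t false)).toReal + (μ (L t true)).toReal)
    (h2 : ∀ t s, t ≠ s → ε < (μ (L t false ∩ L s true)).toReal) :
    ∃ S : Set T, S.Nonempty ∧ DenseInItself S ∧
      ∀ a ⊆ S, a.Finite → ∀ φ : T → Bool, (⋂ t ∈ a, L t (φ t)).Nonempty := by
  let : MetricSpace T := TopologicalSpace.metrizableSpaceMetric T
  have : SecondCountableTopology T := UniformSpace.secondCountable_of_separable T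
  obtain ⟨S, hS, hdense, hind⟩ := exists_denseInItself_independent_general (μ := μ) hmeas
    (ENNReal.ofReal_pos.2 hε).ne' fun t s hts =>
      ((ENNReal.ofReal_lt_iff_lt_toReal hε.le (measure_ne_top _ _)).2 (h2 t s hts)).le
  exact ⟨S, hS, hdense, fun a ha hfin φ => nonempty_of_measure_ne_zero (hind a ha hfin φ)⟩
end

section
/- Let X be a Borel subset of a Polish space and let K ⊆ CD(X) be a compact space. Then for every Radon probability measure μ on K, the set {x ∈ X : μ({g ∈ K : osc(g, x) > 0}) > 0} is countable. -/
open MeasureTheory Set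

/-! The set of pairs `(x, g)` at which `g` is discontinuous is measurable in `X × K`, because the
oscillation is a countable infimum, over a countable basis of `X`, of functions of `g` that are
lower semicontinuous for the pointwise topology. If the points `x` whose section in `K` has positive
`μ`-measure were uncountably many, an atomless probability measure `ν` on `X` would be concentrated
on them, so the set of pairs would have positive `ν.prod μ`-measure. But by Fubini's theorem it is
null, since for each `g` its section in `X` is countable, hence `ν`-null. -/

section Oscillation

variable {X E : Type*} [TopologicalSpace X] [PseudoEMetricSpace E]

theorem oscillation_eq_biInf_of_hasBasis {ι : Sort*} {p : ι → Prop} {s : ι → Set X} {x : X}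
    (h : (nhds x).HasBasis p s) (f : X → E) :
    oscillation f x = ⨅ (i) (_ : p i), Metric.ediam (f '' s i) :=
  (h.map f).biInf_mem fun _ _ => Metric.ediam_mono

theorem oscillation_pos_iff_not_continuousAt (f : X → E) (x : X) :
    0 < oscillation f x ↔ ¬ ContinuousAt f x :=
  pos_iff_ne_zero.trans (Oscillation.eq_zero_iff_continuousAt f x).not

theorem osc_univ_eq_oscillation (g : X → ℝ) (x : X) : osc g univ x = oscillation g x := by
  simp only [osc, inter_univ, oscillation_eq_biInf_of_hasBasis (nhds_basis_opens x), iInf_and]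
  exact iInf_congr fun U => iInf_comm

end Oscillation

section Family

variable {X E K : Type*} [PseudoEMetricSpace E] [TopologicalSpace K] {F : K → X → E}

theorem lowerSemicontinuous_ediam_image_s10 (hF : ∀ x, Continuous fun k => F k x) (s : Set X) :
    LowerSemicontinuous fun k => Metric.ediam (F k '' s) := by
  simp only [Metric.ediam, iSup_image]
  exact lowerSemicontinuous_biSup fun x _ => lowerSemicontinuous_biSup fun y _ =>
    ((hF x).edist (hF y)).lowerSemicontinuous

variable [TopologicalSpace X] [SecondCountableTopology X] [MeasurableSpace X]
  [OpensMeasurableSpace X] [MeasurableSpace K] [OpensMeasurableSpace K]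

theorem measurable_oscillation (hF : ∀ x, Continuous fun k => F k x) :
    Measurable fun p : X × K => oscillation (F p.2) p.1 := by
  classical
  have hB := TopologicalSpace.isBasis_countableBasis X
  simp only [oscillation_eq_biInf_of_hasBasis hB.nhds_hasBasis, iInf_and]
  refine Measurable.biInf _ (TopologicalSpace.countable_countableBasis X) fun U hU => ?_
  simp only [iInf_eq_if]
  exact Measurable.ite (measurable_fst (hB.isOpen hU).measurableSet)
    ((lowerSemicontinuous_ediam_image_s10 hF U).measurable.comp measurable_snd) measurable_const

end Family

section Fubini

variable {X : Type*} [MeasurableSpace X] [StandardBorelSpace X]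

theorem exists_isProbabilityMeasure_nullSingletonClass_of_not_countable {A : Set X}
    (hA : MeasurableSet A) (hAc : ¬ A.Countable) :
    ∃ ν : Measure X, IsProbabilityMeasure ν ∧ NullSingletonClass ν ∧ ν A = 1 := by
  have := hA.standardBorel
  have hI : ¬ Countable unitInterval := fun _ =>
    one_ne_zero <| measure_univ.symm.trans <|
      countable_univ.measure_zero (volume : Measure unitInterval)
  let e : unitInterval ≃ᵐ A :=
    PolishSpace.measurableEquivOfNotCountable hI (mt countable_coe_iff.1 hAc)
  let f : unitInterval → X := fun t => e t
  have hf : Measurable f := measurable_subtype_coe.comp e.measurable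
  have hf_inj : Function.Injective f := Subtype.val_injective.comp e.injective
  refine ⟨volume.map f, Measure.isProbabilityMeasure_map hf.aemeasurable, ⟨fun x => ?_⟩, ?_⟩
  · rw [Measure.map_apply hf (measurableSet_singleton x)]
    exact ((countable_singleton x).preimage hf_inj).measure_zero volume
  · have hfA : f ⁻¹' A = univ := eq_univ_of_forall fun t => (e t).2
    rw [Measure.map_apply hf hA, hfA, measure_univ]

theorem countable_setOf_measure_section_pos {Ω : Type*} [MeasurableSpace Ω] (μ : Measure Ω)
    [SFinite μ] {S : Set (X × Ω)} (hS : MeasurableSet S)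
    (hSc : ∀ ω, {x | (x, ω) ∈ S}.Countable) :
    {x | 0 < μ {ω | (x, ω) ∈ S}}.Countable := by
  by_contra hA
  have hA_meas : MeasurableSet {x | 0 < μ {ω | (x, ω) ∈ S}} :=
    measurableSet_lt measurable_const (measurable_measure_prodMk_left hS)
  obtain ⟨ν, _, _, hνA⟩ :=
    exists_isProbabilityMeasure_nullSingletonClass_of_not_countable hA_meas hA
  have hS_null : ν.prod μ S = 0 := by
    rw [Measure.prod_apply_symm hS]
    exact (lintegral_congr fun ω => (hSc ω).measure_zero ν).trans lintegral_zero
  have hA_null : ν {x | 0 < μ {ω | (x, ω) ∈ S}} = 0 := by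
    simp only [pos_iff_ne_zero]
    exact Measure.measure_ae_null_of_prod_null hS_null
  exact zero_ne_one (hA_null.symm.trans hνA)

end Fubini

theorem countable_set_of_positive_oscillation_general
    {X E K : Type*} [TopologicalSpace X] [SecondCountableTopology X] [MeasurableSpace X]
    [StandardBorelSpace X] [OpensMeasurableSpace X] [PseudoEMetricSpace E]
    [TopologicalSpace K] [MeasurableSpace K] [OpensMeasurableSpace K]
    {F : K → X → E} (hF : ∀ x, Continuous fun k => F k x)
    (hF_disc : ∀ k, {x | ¬ ContinuousAt (F k) x}.Countable) (μ : Measure K) [SFinite μ] :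
    {x | 0 < μ {k | 0 < oscillation (F k) x}}.Countable := by
  have hS : MeasurableSet {p : X × K | 0 < oscillation (F p.2) p.1} :=
    measurableSet_lt measurable_const (measurable_oscillation hF)
  refine countable_setOf_measure_section_pos μ hS fun k => ?_
  simpa only [mem_ofPred_eq, oscillation_pos_iff_not_continuousAt] using hF_disc k

theorem countable_set_of_positive_oscillation
    {Y : Type*} [TopologicalSpace Y] [PolishSpace Y] [MeasurableSpace Y] [BorelSpace Y]
    (X : Set Y) (hX : MeasurableSet X)
    (K : Set (X → ℝ)) (hK : IsCompact K)
    (hCD : ∀ g ∈ K, {x : X | ¬ ContinuousAt g x}.Countable)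
    [MeasurableSpace K] [BorelSpace K]
    (μ : Measure K) [IsProbabilityMeasure μ] [μ.Regular] :
    {x : X | 0 < μ {g : K | 0 < osc (g.val : X → ℝ) univ x}}.Countable := by
  have := hX.standardBorel
  simpa only [osc_univ_eq_oscillation] using
    countable_set_of_positive_oscillation_general (F := fun g : K => g.val)
      (fun x => (continuous_apply x).comp continuous_subtype_val) (fun g => hCD g g.2) μ
end
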